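/- arXiv:1906.04227 — 14 statements merged into one kernel-verified Lean document; each statement's English description precedes it below -/
import Mathlib

section
/- Fix an integer n ≥ 2. The subset Q⁻ = {x ∈ H : |x| < 1} of H = ℤ[1/n] is symmetric and strictly confining for H under the action of α⁻¹, where α⁻¹(x) = x/n. That is: α⁻¹(Q⁻) is a proper subset of Q⁻; for every x ∈ H there exists k ≥ 0 with x/n^k ∈ Q⁻ (equivalently H = ⋃_{k≥0} α^k(Q⁻)); and α⁻¹(Q⁻ + Q⁻) ⊆ Q⁻. -/
/-- `x ∈ H = ℤ[1/n]`: `x` is a rational of the form `a / n^k`. -/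
def inH (n : ℕ) (x : ℚ) : Prop := ∃ (a : ℤ) (k : ℕ), x = (a : ℚ) / (n : ℚ) ^ k

/-- A subset of `ℚ` is symmetric if it is closed under negation. -/
def IsSymmSet (Q : Set ℚ) : Prop := ∀ x ∈ Q, -x ∈ Q

/-- `Q ⊆ H` is confining for `H = ℤ[1/n]` under the action of `α⁻¹ : x ↦ x/n`:
(a) `α⁻¹(Q) ⊆ Q`; (b) every `x ∈ H` satisfies `α^{-k}(x) ∈ Q` for some `k ≥ 0`;
(c) there is `k₀ ≥ 0` with `α^{-k₀}(Q + Q) ⊆ Q`. -/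
def ConfiningInv (n : ℕ) (Q : Set ℚ) : Prop :=
  (∀ x ∈ Q, inH n x) ∧
  (∀ x ∈ Q, x / (n : ℚ) ∈ Q) ∧
  (∀ x : ℚ, inH n x → ∃ k : ℕ, x / (n : ℚ) ^ k ∈ Q) ∧
  (∃ k₀ : ℕ, ∀ x ∈ Q, ∀ y ∈ Q, (x + y) / (n : ℚ) ^ k₀ ∈ Q)

/-- `Q⁻ = {x ∈ H : |x| < 1}`. -/
def Qminus (n : ℕ) : Set ℚ := {x | inH n x ∧ |x| < 1}

/-!
Since `α` scales absolute values by `n`, the set `α^k(Q⁻)` is `{x ∈ H : |x| < n^k}`, so everything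
comes down to comparing an absolute value with a power of `n`: `1 ≤ n` gives (a), the archimedean
property gives (b), and `|x + y| < 2 ≤ n` gives (c) with `k₀ = 1`. The inclusion in (a) is strict
because `1` lies in `α(Q⁻)` but not in `Q⁻`.
-/

section

variable {n : ℕ} {x y : ℚ}

namespace inH

theorem one (n : ℕ) : inH n 1 :=
  ⟨1, 0, by simp⟩

theorem neg (hx : inH n x) : inH n (-x) := by
  obtain ⟨a, k, rfl⟩ := hx
  exact ⟨-a, k, by rw [Int.cast_neg, neg_div]⟩

theorem add (hn : n ≠ 0) (hx : inH n x) (hy : inH n y) : inH n (x + y) := by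
  obtain ⟨a, k, rfl⟩ := hx
  obtain ⟨b, l, rfl⟩ := hy
  have hn' : (n : ℚ) ≠ 0 := Nat.cast_ne_zero.mpr hn
  refine ⟨a * n ^ l + n ^ k * b, k + l, ?_⟩
  rw [div_add_div _ _ (pow_ne_zero k hn') (pow_ne_zero l hn'), pow_add]
  push_cast
  rfl

theorem div_pow (hx : inH n x) (j : ℕ) : inH n (x / (n : ℚ) ^ j) := by
  obtain ⟨a, k, rfl⟩ := hx
  exact ⟨a, k + j, by rw [div_div, pow_add]⟩

end inH

namespace Qminus

theorem isSymmSet (n : ℕ) : IsSymmSet (Qminus n) :=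
  fun x hx => ⟨hx.1.neg, (abs_neg x).trans_lt hx.2⟩

theorem div_pow_mem_iff (hn : n ≠ 0) (hx : inH n x) (k : ℕ) :
    x / (n : ℚ) ^ k ∈ Qminus n ↔ |x| < (n : ℚ) ^ k := by
  have hpos : (0 : ℚ) < (n : ℚ) ^ k := by positivity
  calc x / (n : ℚ) ^ k ∈ Qminus n
    _ ↔ |x / (n : ℚ) ^ k| < 1 := and_iff_right (hx.div_pow k)
    _ ↔ |x| < (n : ℚ) ^ k := by rw [abs_div, abs_of_pos hpos, div_lt_one hpos]

theorem div_mem_iff (hn : n ≠ 0) (hx : inH n x) : x / (n : ℚ) ∈ Qminus n ↔ |x| < n := by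
  simpa only [pow_one] using div_pow_mem_iff hn hx 1

theorem div_mem (hn : n ≠ 0) (hx : x ∈ Qminus n) : x / (n : ℚ) ∈ Qminus n :=
  (div_mem_iff hn hx.1).mpr <| hx.2.trans_le <| Nat.one_le_cast.mpr <| Nat.one_le_iff_ne_zero.mpr hn

theorem exists_div_pow_mem (hn : 1 < n) (hx : inH n x) : ∃ k : ℕ, x / (n : ℚ) ^ k ∈ Qminus n := by
  obtain ⟨k, hk⟩ := pow_unbounded_of_one_lt |x| (Nat.one_lt_cast.mpr hn : (1 : ℚ) < n)
  exact ⟨k, (div_pow_mem_iff (by lia) hx k).mpr hk⟩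

theorem add_div_mem (hn : 2 ≤ n) (hx : x ∈ Qminus n) (hy : y ∈ Qminus n) :
    (x + y) / (n : ℚ) ∈ Qminus n := by
  have hn₀ : n ≠ 0 := by lia
  refine (div_mem_iff hn₀ (hx.1.add hn₀ hy.1)).mpr ?_
  calc |x + y| ≤ |x| + |y| := abs_add_le x y
    _ < 1 + 1 := add_lt_add hx.2 hy.2
    _ ≤ n := by exact_mod_cast hn

theorem confiningInv (hn : 2 ≤ n) : ConfiningInv n (Qminus n) :=
  ⟨fun _ hx => hx.1, fun _ hx => div_mem (by lia) hx, fun _ hx => exists_div_pow_mem hn hx,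
    1, fun x hx y hy => by simpa only [pow_one] using add_div_mem hn hx hy⟩

theorem image_div_ssubset (hn : 1 < n) : (fun x : ℚ => x / (n : ℚ)) '' Qminus n ⊂ Qminus n := by
  have hn₀ : n ≠ 0 := by lia
  have one_notMem : (1 : ℚ) ∉ Qminus n := fun h => h.2.ne abs_one
  have one_div_mem : 1 / (n : ℚ) ∈ Qminus n :=
    (div_mem_iff hn₀ (inH.one n)).mpr <| by rw [abs_one]; exact_mod_cast hn
  have div_injective : Function.Injective fun x : ℚ => x / (n : ℚ) :=
    fun _ _ => (div_left_inj' (Nat.cast_ne_zero.mpr hn₀)).mp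
  exact Set.ssubset_iff_exists.mpr ⟨Set.image_subset_iff.mpr fun _ hx => div_mem hn₀ hx,
    1 / (n : ℚ), one_div_mem, fun h => one_notMem (div_injective.mem_set_image.mp h)⟩

end Qminus

end

/-- `Q⁻ = {x ∈ H : |x| < 1}` is symmetric and strictly confining for `H = ℤ[1/n]`
under the action of `α⁻¹ : x ↦ x/n`; moreover condition (c) holds with `k₀ = 1`,
i.e. `α⁻¹(Q⁻ + Q⁻) ⊆ Q⁻`. -/
theorem Qminus_strictly_confining (n : ℕ) (hn : 2 ≤ n) :
    IsSymmSet (Qminus n) ∧ ConfiningInv n (Qminus n) ∧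
      (fun x : ℚ => x / (n : ℚ)) '' Qminus n ⊂ Qminus n ∧
      (∀ x ∈ Qminus n, ∀ y ∈ Qminus n, (x + y) / (n : ℚ) ∈ Qminus n) :=
  ⟨Qminus.isSymmSet n, Qminus.confiningInv hn, Qminus.image_div_ssubset hn,
    fun _ hx _ hy => Qminus.add_div_mem hn hx hy⟩
end

section
/- Fix an integer n ≥ 2 and let H = ℤ[1/n] with α(x) = n·x. Suppose Q ⊆ H is a symmetric subset confining for H under the action of α, S ⊆ H is a symmetric subset, and K ≥ 0 is such that α^K(g) ∈ Q for all g ∈ S. Then the set Q̄ = Q ∪ ⋃_{i≥0} α^i(S) is symmetric and confining for H under the action of α, and moreover every y ∈ Q̄ satisfies α^j(y) ∈ Q for some 0 ≤ j ≤ K. -/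
/-- `Q ⊆ H` is confining for `H = ℤ[1/n]` under the action of `α : x ↦ n·x`. -/
def Confining (n : ℕ) (Q : Set ℚ) : Prop :=
  (∀ x ∈ Q, inH n x) ∧
  (∀ x ∈ Q, (n : ℚ) * x ∈ Q) ∧
  (∀ x : ℚ, inH n x → ∃ k : ℕ, (n : ℚ) ^ k * x ∈ Q) ∧
  (∃ k₀ : ℕ, ∀ x ∈ Q, ∀ y ∈ Q, (n : ℚ) ^ k₀ * (x + y) ∈ Q)

/-- The enlargement `Q̄ = Q ∪ ⋃_{i ≥ 0} α^i(S)`. -/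
def Qbar (n : ℕ) (Q S : Set ℚ) : Set ℚ :=
  Q ∪ ⋃ i : ℕ, (fun x : ℚ => (n : ℚ) ^ i * x) '' S

/-!
For an `α`-invariant `Q`, the set `Q̄` is the least `α`-invariant set containing `Q ∪ S`. Since
`(α^K)⁻¹(Q)` is such a set, `α^K` maps `Q̄` back into `Q`. An invariant set between `Q` and `H` that
`α^K` maps into `Q` inherits confinement from `Q`: if `α^k₀(Q + Q) ⊆ Q`, then
`α^(k₀ + K)(Q̄ + Q̄) = α^k₀(α^K(Q̄) + α^K(Q̄)) ⊆ Q ⊆ Q̄`.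
-/

open Set Function

section AdjoinOrbits

variable {X : Type*} {f g : X → X} {Q S T : Set X}

/-- The enlargement `Q̄` of `Q` by all forward `f`-orbits of points of `S`, for an arbitrary
self-map `f`. -/
def adjoinOrbits (f : X → X) (Q S : Set X) : Set X :=
  Q ∪ ⋃ i : ℕ, f^[i] '' S

theorem subset_adjoinOrbits_left : Q ⊆ adjoinOrbits f Q S :=
  subset_union_left

theorem subset_adjoinOrbits_right : S ⊆ adjoinOrbits f Q S := fun x hx ↦
  Or.inr (mem_iUnion.2 ⟨0, x, hx, rfl⟩)

theorem mapsTo_adjoinOrbits (hQ : MapsTo f Q Q) :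
    MapsTo f (adjoinOrbits f Q S) (adjoinOrbits f Q S) := by
  rintro y (hy | hy)
  · exact subset_adjoinOrbits_left (hQ hy)
  · obtain ⟨i, x, hx, rfl⟩ := mem_iUnion.1 hy
    exact Or.inr (mem_iUnion.2 ⟨i + 1, x, hx, iterate_succ_apply' f i x⟩)

theorem adjoinOrbits_subset (hQ : Q ⊆ T) (hS : S ⊆ T) (hT : MapsTo f T T) :
    adjoinOrbits f Q S ⊆ T :=
  union_subset hQ (iUnion_subset fun i ↦ ((hT.iterate i).mono_left hS).image_subset)

theorem mapsTo_iterate_adjoinOrbits {K : ℕ} (hQ : MapsTo f Q Q) (hS : MapsTo f^[K] S Q) :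
    MapsTo f^[K] (adjoinOrbits f Q S) Q := by
  have h_comm : Semiconj f^[K] f f := Function.Commute.iterate_self f K
  exact adjoinOrbits_subset (hQ.iterate K) hS (h_comm.mapsTo_preimage hQ)

theorem mapsTo_adjoinOrbits_of_commute (hfg : Function.Commute f g) (hfQ : MapsTo f Q Q)
    (hgQ : MapsTo g Q Q) (hgS : MapsTo g S S) :
    MapsTo g (adjoinOrbits f Q S) (adjoinOrbits f Q S) := by
  have h_inv : MapsTo f (g ⁻¹' adjoinOrbits f Q S) (g ⁻¹' adjoinOrbits f Q S) :=
    hfg.symm.semiconj.mapsTo_preimage (mapsTo_adjoinOrbits hfQ)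
  exact adjoinOrbits_subset (hgQ.mono_right subset_adjoinOrbits_left)
    (hgS.mono_right subset_adjoinOrbits_right) h_inv

end AdjoinOrbits

/-- `Q ⊆ H` is confining for `H` under the action of an additive endomorphism `α`. The set `H` sits
inside an ambient `G` on which `α` acts, as `ℤ[1/n]` does inside `ℚ`. Symmetry of `Q` is a separate
condition. -/
structure IsConfining {G : Type*} [AddMonoid G] (α : G →+ G) (H Q : Set G) : Prop where
  subset : Q ⊆ H
  mapsTo : MapsTo α Q Q
  exists_iterate_mem : ∀ x ∈ H, ∃ k : ℕ, α^[k] x ∈ Q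
  exists_iterate_add_mem : ∃ k : ℕ, ∀ x ∈ Q, ∀ y ∈ Q, α^[k] (x + y) ∈ Q

theorem IsConfining.of_mapsTo_iterate {G : Type*} [AddMonoid G] {α : G →+ G} {H Q R : Set G}
    {K : ℕ} (hQ : IsConfining α H Q) (hQR : Q ⊆ R) (hRH : R ⊆ H) (hR : MapsTo α R R)
    (hK : MapsTo α^[K] R Q) : IsConfining α H R where
  subset := hRH
  mapsTo := hR
  exists_iterate_mem x hx := (hQ.exists_iterate_mem x hx).imp fun _ hk ↦ hQR hk
  exists_iterate_add_mem := by
    obtain ⟨k₀, hk₀⟩ := hQ.exists_iterate_add_mem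
    refine ⟨k₀ + K, fun x hx y hy ↦ hQR ?_⟩
    rw [iterate_add_apply, iterate_map_add]
    exact hk₀ _ (hK hx) _ (hK hy)

theorem Qbar_confining_general {G : Type*} [AddGroup G] {α : G →+ G} {H Q S : Set G} {K : ℕ}
    (hH : MapsTo α H H) (hQneg : ∀ x ∈ Q, -x ∈ Q) (hQ : IsConfining α H Q)
    (hSneg : ∀ x ∈ S, -x ∈ S) (hSH : S ⊆ H) (hK : ∀ g ∈ S, α^[K] g ∈ Q) :
    (∀ x ∈ adjoinOrbits α Q S, -x ∈ adjoinOrbits α Q S) ∧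
      IsConfining α H (adjoinOrbits α Q S) ∧
      ∀ y ∈ adjoinOrbits α Q S, ∃ j ≤ K, α^[j] y ∈ Q := by
  have h_return := mapsTo_iterate_adjoinOrbits hQ.mapsTo hK
  exact ⟨mapsTo_adjoinOrbits_of_commute (map_neg α) hQ.mapsTo hQneg hSneg,
    hQ.of_mapsTo_iterate subset_adjoinOrbits_left (adjoinOrbits_subset hQ.subset hSH hH)
      (mapsTo_adjoinOrbits hQ.mapsTo) h_return,
    fun y hy ↦ ⟨K, le_rfl, h_return hy⟩⟩

theorem iterate_mulLeft {R : Type*} [Semiring R] (a : R) (k : ℕ) :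
    (AddMonoidHom.mulLeft a)^[k] = (a ^ k * ·) :=
  mul_left_iterate a k

theorem inH.natCast_mul {n : ℕ} {x : ℚ} (hx : inH n x) : inH n (n * x) := by
  obtain ⟨a, k, rfl⟩ := hx
  exact ⟨n * a, k, by push_cast; ring⟩

theorem confining_iff_isConfining {n : ℕ} {Q : Set ℚ} :
    Confining n Q ↔ IsConfining (AddMonoidHom.mulLeft (n : ℚ)) {x | inH n x} Q := by
  constructor
  · rintro ⟨h_sub, h_maps, h_abs, h_add⟩
    exact ⟨h_sub, h_maps, by simpa only [iterate_mulLeft, mem_ofPred_eq] using h_abs,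
      by simpa only [iterate_mulLeft] using h_add⟩
  · rintro ⟨h_sub, h_maps, h_abs, h_add⟩
    exact ⟨h_sub, h_maps, by simpa only [iterate_mulLeft, mem_ofPred_eq] using h_abs,
      by simpa only [iterate_mulLeft] using h_add⟩

theorem Qbar_eq_adjoinOrbits (n : ℕ) (Q S : Set ℚ) :
    Qbar n Q S = adjoinOrbits (AddMonoidHom.mulLeft (n : ℚ)) Q S := by
  simp only [Qbar, adjoinOrbits, iterate_mulLeft]

/-- If `Q` is symmetric confining under `α`, `S ⊆ H` is symmetric, and `α^K(S) ⊆ Q`,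
then `Q̄ = Q ∪ ⋃_{i≥0} α^i(S)` is symmetric and confining under `α`, and every
`y ∈ Q̄` satisfies `α^j(y) ∈ Q` for some `0 ≤ j ≤ K`. -/
theorem Qbar_confining (n : ℕ) (hn : 2 ≤ n) (Q S : Set ℚ)
    (hQsymm : IsSymmSet Q) (hQconf : Confining n Q)
    (hSsymm : IsSymmSet S) (hSH : ∀ x ∈ S, inH n x)
    (K : ℕ) (hK : ∀ g ∈ S, (n : ℚ) ^ K * g ∈ Q) :
    IsSymmSet (Qbar n Q S) ∧ Confining n (Qbar n Q S) ∧
      (∀ y ∈ Qbar n Q S, ∃ j ≤ K, (n : ℚ) ^ j * y ∈ Q) := by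
  simpa only [IsSymmSet, Qbar_eq_adjoinOrbits, confining_iff_isConfining, iterate_mulLeft] using
    Qbar_confining_general (fun _ ↦ inH.natCast_mul) hQsymm (confining_iff_isConfining.1 hQconf)
      hSsymm hSH (by simpa only [iterate_mulLeft] using hK)
end

section
/- Fix an integer n ≥ 2 and let H = ℤ[1/n] with α(x) = n·x. Suppose Q ⊆ H is a symmetric subset confining for H under the action of α with 1 ∈ Q. Then there exists R ≥ 1 such that every integer m ∈ ℤ can be written as a sum of at most R elements of Q. -/
/-! Let `b = n ^ k₀`, so that `b(Q + Q) ⊆ Q`. Multiplication by `b` is additive, so it also maps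
`kQ + kQ` into the `k`-fold sumset `kQ`, whatever `k` is. Since `kQ` contains the digits
`0, 1, …, b` once `k = b`, induction along base-`b` expansions never needs more summands: if
`b * q ∈ bQ` and `m = b * q + s` with `s ≤ b`, then `b * m = b * (b * q + s) ∈ bQ`. Hence
`b * q ∈ bQ` for every natural number `q`, and adding a last digit puts every `m` in `2bQ`.
Multiplication by `b` may be any additive map `φ`, and `1` any element `a` of `Q`, such that
`φ a = b • a`. -/

open Set

section Sumset

-- Makes `k • Q` the `k`-fold sumset `Q + ⋯ + Q`, not the dilate `{k • x | x ∈ Q}`.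
attribute [local instance] Set.addCommMonoid

lemma mem_nsmul_iff_exists_sum_range {G : Type*} [AddCommMonoid G] {Q : Set G} {k : ℕ} {x : G} :
    x ∈ k • Q ↔ ∃ f : ℕ → G, (∀ i < k, f i ∈ Q) ∧ x = ∑ i ∈ Finset.range k, f i := by
  refine mem_nsmul_iff_sum.trans ⟨?_, ?_⟩
  · rintro ⟨f, hf, rfl⟩
    refine ⟨fun i => if h : i < k then f ⟨i, h⟩ else 0, fun i hi => ?_, ?_⟩
    · simpa only [dif_pos hi] using hf ⟨i, hi⟩
    · simp only [Finset.sum_range, Fin.is_lt, dif_pos, Fin.eta]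
  · rintro ⟨f, hf, rfl⟩
    exact ⟨fun i => f i, fun i => hf i i.is_lt, (Finset.sum_range f).symm⟩

lemma mapsTo_nsmul {G H : Type*} [AddCommMonoid G] [AddCommMonoid H] (φ : G →+ H)
    {S : Set G} {T : Set H} (h : MapsTo φ S T) (k : ℕ) : MapsTo φ (k • S) (k • T) :=
  mapsTo_iff_image_subset.2 <|
    (image_nsmul φ S k).trans_subset (nsmul_subset_nsmul_left h.image_subset)

section AddCommMonoid

variable {G : Type*} [AddCommMonoid G] {Q : Set G} {φ : G →+ G} {a : G} {b : ℕ}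

lemma map_add_mem_nsmul (hφ : ∀ x ∈ Q, ∀ y ∈ Q, φ (x + y) ∈ Q) {k : ℕ} {x y : G}
    (hx : x ∈ k • Q) (hy : y ∈ k • Q) : φ (x + y) ∈ k • Q :=
  mapsTo_nsmul φ (add_subset_iff.2 hφ) k (nsmul_add Q Q k ▸ add_mem_add hx hy)

lemma nsmul_mem_nsmul_of_le (h0 : (0 : G) ∈ Q) (ha : a ∈ Q) {s k : ℕ} (hs : s ≤ k) :
    s • a ∈ k • Q :=
  nsmul_subset_nsmul_right h0 hs (nsmul_mem_nsmul ha)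

lemma map_div_nsmul_add_mod_nsmul (hφa : φ a = b • a) (m : ℕ) :
    φ ((m / b) • a) + (m % b) • a = m • a := by
  rw [map_nsmul, hφa, ← mul_nsmul, ← add_nsmul, Nat.div_add_mod]

lemma map_nsmul_mem_nsmul (hφ : ∀ x ∈ Q, ∀ y ∈ Q, φ (x + y) ∈ Q) (hφa : φ a = b • a)
    (hb : b ≠ 0) (h0 : (0 : G) ∈ Q) (ha : a ∈ Q) (m : ℕ) : φ (m • a) ∈ b • Q := by
  induction m using Nat.strong_induction_on with
  | _ m ih =>
    rcases m with _ | m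
    · simpa using zero_mem_nsmul h0
    -- Expanding `m` rather than `m + 1` gives a digit in `1, …, b`, so the quotient decreases
    -- even when `b = 1`.
    have hquotient : φ ((m / b) • a) ∈ b • Q := ih _ (Nat.lt_succ_of_le (Nat.div_le_self m b))
    have hdigit : (m % b + 1) • a ∈ b • Q :=
      nsmul_mem_nsmul_of_le h0 ha (Nat.mod_lt m (Nat.pos_of_ne_zero hb))
    have hexpansion : (m + 1) • a = φ ((m / b) • a) + (m % b + 1) • a := by
      rw [succ_nsmul, succ_nsmul, ← add_assoc, map_div_nsmul_add_mod_nsmul hφa]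
    rw [hexpansion]
    exact map_add_mem_nsmul hφ hquotient hdigit

lemma nsmul_mem_two_mul_nsmul (hφ : ∀ x ∈ Q, ∀ y ∈ Q, φ (x + y) ∈ Q) (hφa : φ a = b • a)
    (hb : b ≠ 0) (h0 : (0 : G) ∈ Q) (ha : a ∈ Q) (m : ℕ) : m • a ∈ (2 * b) • Q := by
  rw [← map_div_nsmul_add_mod_nsmul hφa m, two_mul, add_nsmul]
  exact add_mem_add (map_nsmul_mem_nsmul hφ hφa hb h0 ha _)
    (nsmul_mem_nsmul_of_le h0 ha (Nat.mod_lt m (Nat.pos_of_ne_zero hb)).le)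

end AddCommMonoid

theorem integers_bounded_word_length_general {G : Type*} [AddCommGroup G] {Q : Set G}
    {φ : G →+ G} {a : G} {b : ℕ} (hneg : ∀ x ∈ Q, -x ∈ Q) (hφ : ∀ x ∈ Q, ∀ y ∈ Q, φ (x + y) ∈ Q)
    (hφa : φ a = b • a) (hb : b ≠ 0) (ha : a ∈ Q) (m : ℤ) : m • a ∈ (2 * b) • Q := by
  have h0 : (0 : G) ∈ Q := by simpa using hφ a ha (-a) (hneg a ha)
  have hnat (j : ℕ) : j • a ∈ (2 * b) • Q := nsmul_mem_two_mul_nsmul hφ hφa hb h0 ha j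
  have hneg_sums : ∀ x ∈ (2 * b) • Q, -x ∈ (2 * b) • Q :=
    fun _ hx => mapsTo_nsmul negAddMonoidHom (fun x => hneg x) (2 * b) hx
  obtain ⟨j, rfl | rfl⟩ := m.eq_nat_or_neg
  · simpa only [natCast_zsmul] using hnat j
  · simpa only [neg_zsmul, natCast_zsmul] using hneg_sums _ (hnat j)

end Sumset

/-- If `Q` is a symmetric confining subset for `H = ℤ[1/n]` under `α : x ↦ n·x`
with `1 ∈ Q`, then there is `R ≥ 1` such that every integer is a sum of at most
`R` elements of `Q`. -/
theorem integers_bounded_word_length (n : ℕ) (hn : 2 ≤ n) (Q : Set ℚ)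
    (hQsymm : IsSymmSet Q) (hQconf : Confining n Q) (hone : (1 : ℚ) ∈ Q) :
    ∃ R : ℕ, 1 ≤ R ∧ ∀ m : ℤ, ∃ r ≤ R, ∃ f : ℕ → ℚ,
      (∀ i < r, f i ∈ Q) ∧ (m : ℚ) = ∑ i ∈ Finset.range r, f i := by
  obtain ⟨-, -, -, k₀, hk₀⟩ := hQconf
  have hb : n ^ k₀ ≠ 0 := pow_ne_zero k₀ (by lia)
  refine ⟨2 * n ^ k₀, by lia, fun m => ⟨_, le_rfl, mem_nsmul_iff_exists_sum_range.1 ?_⟩⟩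
  simpa using integers_bounded_word_length_general (φ := AddMonoidHom.mulLeft ((n : ℚ) ^ k₀))
    hQsymm hk₀ (by simp) hb hone m
end

section
/- Fix an integer n ≥ 2 and let H = ℤ[1/n] with α(x) = n·x. If Q ⊆ H is a symmetric subset confining for H under the action of α, then there exists K ≥ 0 such that n^K·m ∈ Q for every integer m ∈ ℤ (that is, α^K(ℤ) ⊆ Q). -/
/-!
Every integer is carried into `Q` by some power of `n`, hence by all larger ones, so a finite set
of integers is carried into `Q` by a single power `n ^ K`. Choose `k ≥ 1` with
`n ^ k * (Q + Q) ⊆ Q` and apply this to the digits in base `n ^ k`. If `n ^ (K + k)` carries `q`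
into `Q` and `d` is a digit, then it also carries `d + n ^ k * q` into `Q`, since

  `n ^ (K + k) * (d + n ^ k * q) = n ^ k * (n ^ K * d + n ^ (K + k) * q)`.

The exponent `K + k` is thus the same for every number of digits. Digits of both signs are allowed,
so that every integer has a finite expansion.
-/

section MulAction

variable {R M : Type*} [Monoid R] [MulAction R M] {a : R} {Q : Set M}

theorem pow_smul_mem_of_le (hQ : ∀ x ∈ Q, a • x ∈ Q) {x : M} {j k : ℕ} (hjk : j ≤ k)
    (hx : a ^ j • x ∈ Q) : a ^ k • x ∈ Q := by
  induction k, hjk using Nat.le_induction with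
  | base => exact hx
  | succ k _ ih => simpa only [pow_succ', mul_smul] using hQ _ ih

theorem exists_forall_pow_smul_mem_of_finite (hQ : ∀ x ∈ Q, a • x ∈ Q) {s : Set M}
    (hs : s.Finite) (h : ∀ x ∈ s, ∃ k : ℕ, a ^ k • x ∈ Q) : ∃ K : ℕ, ∀ x ∈ s, a ^ K • x ∈ Q := by
  refine ((Filter.eventually_all_finite hs).2 fun x hx ↦ ?_).exists (f := Filter.atTop)
  obtain ⟨k, hk⟩ := h x hx
  filter_upwards [Filter.eventually_ge_atTop k] with j hkj
  exact pow_smul_mem_of_le hQ hkj hk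

theorem pow_smul_eq_pow_smul {S : Type*} [Monoid S] [MulAction S M] [SMulCommClass R S M]
    {b : S} {x : M} (h : a • x = b • x) (k : ℕ) : a ^ k • x = b ^ k • x := by
  induction k with
  | zero => simp only [pow_zero, one_smul]
  | succ k ih => rw [pow_succ, mul_smul, h, smul_comm, ih, ← mul_smul, ← pow_succ']

end MulAction

theorem pow_add_smul_add_pow_smul_mem {R M : Type*} [Monoid R] [AddMonoid M] [DistribMulAction R M]
    {a : R} {Q : Set M} {k K : ℕ} (hadd : ∀ x ∈ Q, ∀ y ∈ Q, a ^ k • (x + y) ∈ Q) {d q : M}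
    (hd : a ^ K • d ∈ Q) (hq : a ^ (K + k) • q ∈ Q) : a ^ (K + k) • (d + a ^ k • q) ∈ Q := by
  have hfactor : a ^ (K + k) • (d + a ^ k • q) = a ^ k • (a ^ K • d + a ^ (K + k) • q) := by
    simp only [smul_add, ← mul_smul, ← pow_add, add_comm]
  exact hfactor ▸ hadd _ hd _ hq

theorem int_digit_induction {b : ℤ} (hb : 1 < |b|) {P : ℤ → Prop} (zero : P 0)
    (digit_add_mul : ∀ d q : ℤ, |d| < |b| → P q → P (d + b * q)) (m : ℤ) : P m := by
  have hb_natAbs : 1 < b.natAbs := by rwa [Int.abs_eq_natAbs, Nat.one_lt_cast] at hb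
  induction hm : m.natAbs using Nat.strong_induction_on generalizing m with
  | _ N ih =>
    obtain rfl | hm₀ := eq_or_ne m 0
    · exact zero
    -- Floor division would not do: it sends `-1` to itself when `b > 0`.
    rw [← Int.tmod_add_mul_tdiv m b]
    have hdigit : |m.tmod b| < |b| := by
      rw [Int.abs_eq_natAbs, Int.abs_eq_natAbs, Nat.cast_lt, Int.natAbs_tmod]
      exact Nat.mod_lt _ (by omega)
    have hquot : (m.tdiv b).natAbs < N := by
      rw [Int.natAbs_tdiv, ← hm]
      exact Nat.div_lt_self (Int.natAbs_pos.2 hm₀) hb_natAbs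
    exact digit_add_mul _ _ hdigit (ih _ hquot _ rfl)

theorem exists_pow_smul_int_mem_general {R M : Type*} [Monoid R] [AddGroup M]
    [DistribMulAction R M] {a : R} {x : M} {n : ℤ} (hn : 1 < |n|) (hx : a • x = n • x)
    {Q : Set M} (hQ : ∀ y ∈ Q, a • y ∈ Q) (habsorb : ∀ m : ℤ, ∃ k : ℕ, a ^ k • m • x ∈ Q)
    (hadd : ∃ k₀ : ℕ, ∀ y ∈ Q, ∀ z ∈ Q, a ^ k₀ • (y + z) ∈ Q) :
    ∃ K : ℕ, ∀ m : ℤ, a ^ K • m • x ∈ Q := by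
  obtain ⟨k₀, hk₀⟩ := hadd
  -- When `k₀ = 0` the base `n ^ k₀` would be `1`, hence the exponent `k₀ + 1`.
  have hadd_succ : ∀ y ∈ Q, ∀ z ∈ Q, a ^ (k₀ + 1) • (y + z) ∈ Q := fun y hy z hz ↦
    pow_smul_mem_of_le hQ k₀.le_succ (hk₀ y hy z hz)
  have hbase : 1 < |n ^ (k₀ + 1)| := by
    rw [abs_pow]
    exact one_lt_pow₀ hn k₀.succ_ne_zero
  have hdigits : {d : ℤ | |d| < |n ^ (k₀ + 1)|}.Finite :=
    (Set.finite_Ioo _ _).subset fun _ hd ↦ abs_lt.1 hd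
  obtain ⟨K, hK⟩ := exists_forall_pow_smul_mem_of_finite hQ (hdigits.image (· • x))
    (Set.forall_mem_image.2 fun d _ ↦ habsorb d)
  have hK_digit (d : ℤ) (hd : |d| < |n ^ (k₀ + 1)|) : a ^ K • d • x ∈ Q :=
    hK _ (Set.mem_image_of_mem _ hd)
  refine ⟨K + (k₀ + 1), int_digit_induction hbase ?_ fun d q hd hq ↦ ?_⟩
  · exact pow_smul_mem_of_le hQ (Nat.le_add_right _ _) (hK_digit 0 (by rw [abs_zero]; omega))
  · have hexpand : (d + n ^ (k₀ + 1) * q) • x = d • x + a ^ (k₀ + 1) • q • x := by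
      rw [add_zsmul, mul_comm, mul_smul, ← pow_smul_eq_pow_smul hx, smul_comm]
    exact hexpand ▸ pow_add_smul_add_pow_smul_mem hadd_succ (hK_digit d hd) hq

/-- If `Q` is a symmetric confining subset for `H = ℤ[1/n]` under `α : x ↦ n·x`,
then there exists `K ≥ 0` with `α^K(ℤ) ⊆ Q`, i.e. `n^K · m ∈ Q` for every `m ∈ ℤ`. -/
theorem exists_pow_smul_int_mem (n : ℕ) (hn : 2 ≤ n) (Q : Set ℚ)
    (hQsymm : IsSymmSet Q) (hQconf : Confining n Q) :
    ∃ K : ℕ, ∀ m : ℤ, (n : ℚ) ^ K * (m : ℚ) ∈ Q := by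
  obtain ⟨-, hmul, habsorb, hadd⟩ := hQconf
  have hn_abs : 1 < |(n : ℤ)| := by rwa [Nat.abs_cast, Nat.one_lt_cast]
  simpa using exists_pow_smul_int_mem_general (a := (n : ℚ)) (x := 1) hn_abs (by simp) hmul
    (fun m ↦ by simpa using habsorb m ⟨m, 0, by simp⟩) hadd
end

section
/- Fix an integer n ≥ 2 and let H = ℤ[1/n] with α(x) = n·x. If Q ⊆ H is a symmetric subset confining for H under the action of α, then L(Q) is an ideal of the ring ℤ_n of n-adic integers: 0 ∈ L(Q), L(Q) is closed under addition, and L(Q) is closed under multiplication by arbitrary elements of ℤ_n. -/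
/-- Membership in `ℤ_n`, realized as the inverse limit of the rings `ℤ/n^lℤ` inside
the product ring `∀ l, ℤ/n^lℤ`: the coordinates are compatible under reduction. -/
def ZnMem (n : ℕ) (x : ∀ l : ℕ, ZMod (n ^ l)) : Prop :=
  ∀ (k l : ℕ) (h : k ≤ l), ZMod.castHom (pow_dvd_pow n h) (ZMod (n ^ k)) (x l) = x k

/-- `I` is an ideal of `ℤ_n`: a subset of `ℤ_n` containing `0`, closed under addition
and under multiplication by arbitrary elements of `ℤ_n`. -/
def IsZnIdeal (n : ℕ) (I : Set (∀ l : ℕ, ZMod (n ^ l))) : Prop :=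
  (∀ x ∈ I, ZnMem n x) ∧ (0 ∈ I) ∧ (∀ x ∈ I, ∀ y ∈ I, x + y ∈ I) ∧
  (∀ r, ZnMem n r → ∀ x ∈ I, r * x ∈ I)

/-- The set `L(Q) ⊆ ℤ_n`: those `x ∈ ℤ_n` such that for every `t ≥ 1` there is a
nonnegative `a ∈ Q` whose fractional part equals `v_t(x)/n^t`. -/
def LSet (n : ℕ) (Q : Set ℚ) : Set (∀ l : ℕ, ZMod (n ^ l)) :=
  {x | ZnMem n x ∧ ∀ t : ℕ, 1 ≤ t →
    ∃ a ∈ Q, 0 ≤ a ∧ Int.fract a = ((x t).val : ℚ) / (n : ℚ) ^ t}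

/-!
A nonnegative rational has fractional part `v_t(x) / n ^ t` exactly when it is `m / n ^ t` for a
natural number `m` congruent to `x` modulo `n ^ t`. In these terms two witnesses at level `t + k`
add up, after multiplication by `n ^ k`, to a witness at level `t`, so `L(Q)` is an additive
submonoid of `ℤ_n`. It is moreover closed in the `n`-adic topology, since membership is tested on
one coordinate at a time. As `ℕ` is dense in `ℤ_n`, a closed additive submonoid is an ideal.
-/

theorem nonneg_and_fract_eq_val_div_iff {K : Type*} [Field K] [LinearOrder K]
    [IsStrictOrderedRing K] [FloorRing K] {N : ℕ} [NeZero N] {a : K} {z : ZMod N} :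
    0 ≤ a ∧ Int.fract a = z.val / N ↔ ∃ m : ℕ, a = m / N ∧ (m : ZMod N) = z := by
  have hN : (N : K) ≠ 0 := NeZero.ne _
  constructor
  · rintro ⟨ha, hfract⟩
    refine ⟨⌊a⌋₊ * N + z.val, ?_, by simp⟩
    calc
      a = ⌊a⌋₊ + Int.fract a := by rw [natCast_floor_eq_intCast_floor ha, Int.floor_add_fract]
      _ = ((⌊a⌋₊ * N + z.val : ℕ) : K) / N := by rw [hfract]; push_cast; field_simp
  · rintro ⟨m, rfl, rfl⟩
    refine ⟨by positivity, ?_⟩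
    rw [ZMod.val_natCast, Int.fract_div_natCast_eq_div_natCast_mod]

namespace ZnMem

variable {n : ℕ} {x y : ∀ l : ℕ, ZMod (n ^ l)}

theorem zero : ZnMem n 0 := fun _ _ _ => map_zero _

theorem add (hx : ZnMem n x) (hy : ZnMem n y) : ZnMem n (x + y) := fun k l h => by
  simp only [Pi.add_apply, map_add, hx k l h, hy k l h]

theorem mul (hx : ZnMem n x) (hy : ZnMem n y) : ZnMem n (x * y) := fun k l h => by
  simp only [Pi.mul_apply, map_mul, hx k l h, hy k l h]

theorem natCast_eq_of_le (hx : ZnMem n x) {k l m : ℕ} (hkl : k ≤ l)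
    (hm : (m : ZMod (n ^ l)) = x l) : (m : ZMod (n ^ k)) = x k := by
  rw [← hx k l hkl, ← hm, map_natCast]

end ZnMem

theorem isZnIdeal_of_closed {n : ℕ} [NeZero n] (I : AddSubmonoid (∀ l : ℕ, ZMod (n ^ l)))
    (hI : ∀ x ∈ I, ZnMem n x)
    (hclosed : ∀ x, ZnMem n x → (∀ t, ∃ y ∈ I, y t = x t) → x ∈ I) :
    IsZnIdeal n (I : Set (∀ l : ℕ, ZMod (n ^ l))) := by
  refine ⟨hI, I.zero_mem, fun x hx y hy => I.add_mem hx hy, fun r hr x hx => ?_⟩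
  refine hclosed _ (hr.mul (hI x hx)) fun t => ⟨(r t).val • x, I.nsmul_mem hx _, ?_⟩
  rw [Pi.smul_apply, Pi.mul_apply, nsmul_eq_mul, ZMod.natCast_zmod_val]

section LSet

variable {n : ℕ} {Q : Set ℚ} {x y : ∀ l : ℕ, ZMod (n ^ l)}

theorem zero_mem_LSet (hQ : 0 ∈ Q) : 0 ∈ LSet n Q :=
  ⟨.zero, fun _ _ => ⟨0, hQ, le_rfl, by simp⟩⟩

theorem mem_LSet_of_forall_exists_apply_eq (hx : ZnMem n x)
    (h : ∀ t, ∃ y ∈ LSet n Q, y t = x t) : x ∈ LSet n Q := by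
  refine ⟨hx, fun t ht => ?_⟩
  obtain ⟨y, hy, hyx⟩ := h t
  exact hyx ▸ hy.2 t ht

variable [NeZero n]

theorem mem_LSet_iff_exists_natCast :
    x ∈ LSet n Q ↔ ZnMem n x ∧ ∀ t : ℕ, 1 ≤ t →
      ∃ m : ℕ, (m : ℚ) / (n : ℚ) ^ t ∈ Q ∧ (m : ZMod (n ^ t)) = x t := by
  refine and_congr_right fun _ => forall₂_congr fun t _ => ?_
  simp only [← Nat.cast_pow, nonneg_and_fract_eq_val_div_iff]
  constructor
  · rintro ⟨_, ha, m, rfl, hm⟩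
    exact ⟨m, ha, hm⟩
  · rintro ⟨m, ha, hm⟩
    exact ⟨_, ha, m, rfl, hm⟩

theorem add_mem_LSet {k : ℕ} (hQ : ∀ a ∈ Q, ∀ b ∈ Q, (n : ℚ) ^ k * (a + b) ∈ Q)
    (hx : x ∈ LSet n Q) (hy : y ∈ LSet n Q) : x + y ∈ LSet n Q := by
  rw [mem_LSet_iff_exists_natCast] at hx hy ⊢
  obtain ⟨hxZn, hx⟩ := hx
  obtain ⟨hyZn, hy⟩ := hy
  refine ⟨hxZn.add hyZn, fun t ht => ?_⟩
  obtain ⟨p, hpQ, hp⟩ := hx (t + k) (by lia)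
  obtain ⟨q, hqQ, hq⟩ := hy (t + k) (by lia)
  have hsum : (n : ℚ) ^ k * (p / (n : ℚ) ^ (t + k) + q / (n : ℚ) ^ (t + k)) =
      ((p + q : ℕ) : ℚ) / (n : ℚ) ^ t := by
    have hn : (n : ℚ) ≠ 0 := NeZero.ne _
    rw [pow_add, Nat.cast_add]
    field_simp
  refine ⟨p + q, hsum ▸ hQ _ hpQ _ hqQ, ?_⟩
  rw [Nat.cast_add, Pi.add_apply, hxZn.natCast_eq_of_le (Nat.le_add_right t k) hp,
    hyZn.natCast_eq_of_le (Nat.le_add_right t k) hq]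

end LSet

theorem Confining.zero_mem {n : ℕ} {Q : Set ℚ} (hQ : Confining n Q) : 0 ∈ Q := by
  obtain ⟨k, hk⟩ := hQ.2.2.1 0 ⟨0, 0, by simp⟩
  simpa only [mul_zero] using hk

theorem LSet_isIdeal_general (n : ℕ) [NeZero n] (Q : Set ℚ) (hzero : 0 ∈ Q)
    (hadd : ∃ k : ℕ, ∀ a ∈ Q, ∀ b ∈ Q, (n : ℚ) ^ k * (a + b) ∈ Q) :
    IsZnIdeal n (LSet n Q) := by
  obtain ⟨k, hk⟩ := hadd
  let L : AddSubmonoid (∀ l : ℕ, ZMod (n ^ l)) :=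
    { carrier := LSet n Q
      zero_mem' := zero_mem_LSet hzero
      add_mem' := add_mem_LSet hk }
  exact isZnIdeal_of_closed L (fun _ hx => hx.1)
    fun _ hx h => mem_LSet_of_forall_exists_apply_eq hx h

/-- If `Q ⊆ H = ℤ[1/n]` is a symmetric confining subset under `α : x ↦ n·x`,
then `L(Q)` is an ideal of the ring `ℤ_n` of `n`-adic integers. -/
theorem LSet_isIdeal (n : ℕ) (hn : 2 ≤ n) (Q : Set ℚ)
    (hQsymm : IsSymmSet Q) (hQconf : Confining n Q) :
    IsZnIdeal n (LSet n Q) := by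
  have : NeZero n := ⟨by lia⟩
  exact LSet_isIdeal_general n Q hQconf.zero_mem hQconf.2.2.2
end

section
/- Fix an integer n ≥ 2 and let H = ℤ[1/n] with α(x) = n·x. If Q ⊆ H is a symmetric subset confining for H under the action of α, then there exists M ≥ 0 such that n^M·a ∈ Q for every a ∈ S(L(Q)) (that is, S(L(Q)) ⊆ α^{-M}(Q)). -/
/-- The set `S(𝔟) ⊆ H = ℤ[1/n]` associated to a subset `𝔟 ⊆ ℤ_n`: those `x ∈ H`
such that for some `s ≥ 0` with `n^s·x ∈ ℤ` there is `b ∈ 𝔟` with the fractional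
part of `|x|` equal to `v_s(b)/n^s`. -/
def SIdeal (n : ℕ) (I : Set (∀ l : ℕ, ZMod (n ^ l))) : Set ℚ :=
  {x | inH n x ∧ ∃ s : ℕ, (∃ m : ℤ, (n : ℚ) ^ s * x = (m : ℚ)) ∧
    ∃ b ∈ I, Int.fract |x| = ((b s).val : ℚ) / (n : ℚ) ^ s}

/-!
If `Q` is confining, one fixed power `n ^ k` brings every sum of two elements of `Q` back into `Q`.
When the base-`n ^ (k + 1)` digits of `N` are added up by Horner's scheme, each step gains a factor
`n ^ (k + 1)` and loses only `n ^ k`, so the losses do not accumulate: a single power `n ^ e` sends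
all the multiples `N q`, `q ∈ Q`, `N ∈ ℕ`, into `Q`. The same then holds for all `N q + z` with
`z ∈ ℤ`. An element `a` of `S(L(Q))` satisfies `|a| = q + z` with `q ∈ Q`, and `-q` is itself of the
form `N q + z` since `n ^ s * q ∈ ℤ` for some `s`; hence `a` is of this form whatever its sign.
-/

theorem pow_smul_mem_of_mapsTo_smul {M X : Type*} [Monoid M] [MulAction M X] {c : M} {Q : Set X}
    (hQ : Set.MapsTo (c • ·) Q Q) (d : ℕ) {x : X} (hx : x ∈ Q) : c ^ d • x ∈ Q := by
  simpa only [smul_iterate] using hQ.iterate d hx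

section HornerScheme

variable {A : Type*} [AddCommMonoid A] {n k : ℕ} {Q : Set A}

theorem pow_mul_nsmul_nsmul_mem (hzero : 0 ∈ Q) (hsmul : Set.MapsTo (n • ·) Q Q)
    (hadd : ∀ x ∈ Q, ∀ y ∈ Q, n ^ k • (x + y) ∈ Q) {x : A} (hx : x ∈ Q) (c : ℕ) :
    n ^ (k * c) • c • x ∈ Q := by
  induction c with
  | zero => simpa only [zero_nsmul, nsmul_zero] using hzero
  | succ c ih =>
    have hsum := hadd _ ih _ (pow_smul_mem_of_mapsTo_smul hsmul (k * c) hx)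
    rwa [← nsmul_add, ← succ_nsmul, smul_smul, ← pow_add, add_comm k, ← Nat.mul_succ] at hsum

theorem exists_pow_nsmul_nsmul_mem (hn : 2 ≤ n) (hzero : 0 ∈ Q) (hsmul : Set.MapsTo (n • ·) Q Q)
    (hadd : ∀ x ∈ Q, ∀ y ∈ Q, n ^ k • (x + y) ∈ Q) :
    ∃ e : ℕ, ∀ x ∈ Q, ∀ N : ℕ, n ^ e • N • x ∈ Q := by
  set B := n ^ (k + 1) with hB
  have hB_gt : 1 < B := Nat.one_lt_pow k.succ_ne_zero hn
  have hdigit : ∀ x ∈ Q, ∀ c < B, n ^ (k * B) • c • x ∈ Q := by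
    intro x hx c hc
    have hmem := pow_smul_mem_of_mapsTo_smul hsmul (k * (B - c))
      (pow_mul_nsmul_nsmul_mem hzero hsmul hadd hx c)
    rwa [smul_smul, ← pow_add, ← mul_add, Nat.sub_add_cancel hc.le] at hmem
  refine ⟨k * B + (k + 1), fun x hx N ↦ ?_⟩
  induction N using Nat.strong_induction_on with
  | _ N ih =>
    rcases N.eq_zero_or_pos with rfl | hN
    · simpa only [zero_nsmul, nsmul_zero] using hzero
    have hquot := ih (N / B) (Nat.div_lt_self hN hB_gt)
    have hrem := hdigit x hx (N % B) (Nat.mod_lt N (by lia))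
    have hhorner : n ^ (k * B + (k + 1)) • N • x =
        n • n ^ k • (n ^ (k * B) • (N % B) • x + n ^ (k * B + (k + 1)) • (N / B) • x) := by
      conv_lhs => rw [← Nat.mod_add_div N B]
      simp only [smul_smul, ← add_smul]
      congr 1
      rw [hB]
      ring
    rw [hhorner]
    exact hsmul (hadd _ hrem _ hquot)

end HornerScheme

namespace Confining

variable {n : ℕ} {Q : Set ℚ}

theorem pow_mul_mem (hQ : Confining n Q) (d : ℕ) {x : ℚ} (hx : x ∈ Q) : (n : ℚ) ^ d * x ∈ Q :=
  pow_smul_mem_of_mapsTo_smul (c := (n : ℚ)) hQ.2.1 d hx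

theorem zero_mem_s6 (hQ : Confining n Q) : 0 ∈ Q := by
  obtain ⟨k, hk⟩ := hQ.2.2.1 0 ⟨0, 0, by simp⟩
  rwa [mul_zero] at hk

theorem exists_pow_mul_nat_mul_mem (hQ : Confining n Q) (hn : 2 ≤ n) :
    ∃ e : ℕ, ∀ q ∈ Q, ∀ N : ℕ, (n : ℚ) ^ e * (N * q) ∈ Q := by
  obtain ⟨k, hadd⟩ := hQ.2.2.2
  have hsmul : Set.MapsTo (n • ·) Q Q := fun q hq ↦ by simpa only [nsmul_eq_mul] using hQ.2.1 q hq
  simpa only [nsmul_eq_mul, Nat.cast_pow] using exists_pow_nsmul_nsmul_mem hn hQ.zero_mem_s6 hsmul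
    (by simpa only [nsmul_eq_mul, Nat.cast_pow] using hadd)

theorem exists_pow_mul_int_mem (hQ : Confining n Q) (hn : 2 ≤ n) :
    ∃ e : ℕ, ∀ z : ℤ, (n : ℚ) ^ e * z ∈ Q := by
  obtain ⟨e, he⟩ := hQ.exists_pow_mul_nat_mul_mem hn
  obtain ⟨i, hi⟩ := hQ.2.2.1 1 ⟨1, 0, by simp⟩
  obtain ⟨j, hj⟩ := hQ.2.2.1 (-1) ⟨-1, 0, by simp⟩
  refine ⟨i + j + e, fun z ↦ ?_⟩
  obtain ⟨N, rfl | rfl⟩ := z.eq_nat_or_neg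
  · convert hQ.pow_mul_mem j (he _ hi N) using 1
    push_cast
    ring
  · convert hQ.pow_mul_mem i (he _ hj N) using 1
    push_cast
    ring

theorem exists_pow_mul_nat_mul_add_int_mem (hQ : Confining n Q) (hn : 2 ≤ n) :
    ∃ e : ℕ, ∀ q ∈ Q, ∀ (N : ℕ) (z : ℤ), (n : ℚ) ^ e * (N * q + z) ∈ Q := by
  obtain ⟨d, hd⟩ := hQ.exists_pow_mul_nat_mul_mem hn
  obtain ⟨e, he⟩ := hQ.exists_pow_mul_int_mem hn
  obtain ⟨k, hk⟩ := hQ.2.2.2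
  refine ⟨k + d + e, fun q hq N z ↦ ?_⟩
  convert hk _ (hQ.pow_mul_mem e (hd q hq N)) _ (hQ.pow_mul_mem d (he z)) using 1
  ring

end Confining

theorem inH.exists_neg_eq_nat_mul_add_int {n : ℕ} (hn : n ≠ 0) {q : ℚ} (hq : inH n q) :
    ∃ (N : ℕ) (z : ℤ), -q = N * q + z := by
  obtain ⟨a, s, rfl⟩ := hq
  refine ⟨n ^ s - 1, -a, ?_⟩
  rw [Nat.cast_pred (by positivity)]
  push_cast
  field_simp
  ring

theorem exists_fract_abs_eq_fract_of_mem_SIdeal_LSet {n : ℕ} {Q : Set ℚ} (hzero : 0 ∈ Q) {a : ℚ}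
    (ha : a ∈ SIdeal n (LSet n Q)) : ∃ q ∈ Q, Int.fract |a| = Int.fract q := by
  obtain ⟨-, s, ⟨m, hm⟩, b, ⟨-, hb⟩, hfract⟩ := ha
  -- `L(Q)` says nothing about `v_0`, but for `s = 0` the number `a` is an integer.
  rcases s.eq_zero_or_pos with rfl | hs
  · have ha_int : a = m := by simpa only [pow_zero, one_mul] using hm
    exact ⟨0, hzero, by rw [ha_int, ← Int.cast_abs, Int.fract_intCast, Int.fract_zero]⟩
  · obtain ⟨q, hq, -, hq_fract⟩ := hb s hs
    exact ⟨q, hq, hfract.trans hq_fract.symm⟩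

theorem Confining.exists_eq_nat_mul_add_int_of_mem_SIdeal_LSet {n : ℕ} (hn : n ≠ 0) {Q : Set ℚ}
    (hQ : Confining n Q) {a : ℚ} (ha : a ∈ SIdeal n (LSet n Q)) :
    ∃ q ∈ Q, ∃ (N : ℕ) (z : ℤ), a = N * q + z := by
  obtain ⟨q, hq, hfract⟩ := exists_fract_abs_eq_fract_of_mem_SIdeal_LSet hQ.zero_mem_s6 ha
  obtain ⟨z, hz⟩ := Int.fract_eq_fract.mp hfract
  refine ⟨q, hq, ?_⟩
  rcases abs_choice a with habs | habs
  · exact ⟨1, z, by push_cast; linarith⟩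
  · obtain ⟨N, w, hneg⟩ := (hQ.1 q hq).exists_neg_eq_nat_mul_add_int hn
    exact ⟨N, w - z, by push_cast; linarith⟩

theorem SIdeal_LSet_subset_general {n : ℕ} (hn : 2 ≤ n) {Q : Set ℚ} (hQ : Confining n Q) :
    ∃ M : ℕ, ∀ a ∈ SIdeal n (LSet n Q), (n : ℚ) ^ M * a ∈ Q := by
  obtain ⟨M, hM⟩ := hQ.exists_pow_mul_nat_mul_add_int_mem hn
  refine ⟨M, fun a ha ↦ ?_⟩
  obtain ⟨q, hq, N, z, rfl⟩ := hQ.exists_eq_nat_mul_add_int_of_mem_SIdeal_LSet (by lia) ha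
  exact hM q hq N z

/-- If `Q ⊆ H = ℤ[1/n]` is a symmetric confining subset under `α : x ↦ n·x`, then
there is `M ≥ 0` with `S(L(Q)) ⊆ α^{-M}(Q)`, i.e. `n^M·a ∈ Q` for all `a ∈ S(L(Q))`. -/
theorem SIdeal_LSet_subset (n : ℕ) (hn : 2 ≤ n) (Q : Set ℚ)
    (hQsymm : IsSymmSet Q) (hQconf : Confining n Q) :
    ∃ M : ℕ, ∀ a ∈ SIdeal n (LSet n Q), (n : ℚ) ^ M * a ∈ Q :=
  SIdeal_LSet_subset_general hn hQconf
end

section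
/- Fix an integer n ≥ 2 and let H = ℤ[1/n] with α(x) = n·x. For every ideal 𝔟 of the ring ℤ_n of n-adic integers, the set S(𝔟) ⊆ H is symmetric and confining for H under the action of α; moreover, condition (c) of the definition holds with k₀ = 0, i.e., S(𝔟) + S(𝔟) ⊆ S(𝔟). -/
/-! If `𝔟` is an ideal, the `x` for which `n ^ s * x` is an integer whose residue modulo `n ^ s` is
the `s`-th coordinate of an element of `𝔟` form a subgroup of `ℚ`. Being a subgroup, it contains `x`
as soon as it contains `|x|`, so the absolute value in `S(𝔟)` is harmless and `S(𝔟)` is the union of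
these subgroups. Coherence of the coordinates makes them increase with `s`, so `S(𝔟)` is a subgroup
of `H`. It contains `ℤ`, the subgroup for `s = 0`, and every element of `H` is moved into `ℤ` by a
power of `α`. -/

theorem fract_intCast_div_eq_val_div_iff {K : Type*} [Field K] [LinearOrder K]
    [IsStrictOrderedRing K] [FloorRing K] {N : ℕ} [NeZero N] (m : ℤ) (z : ZMod N) :
    Int.fract ((m : K) / N) = (z.val : K) / N ↔ z = m := by
  have hN : (N : K) ≠ 0 := NeZero.ne _
  rw [Int.fract_div_intCast_eq_div_intCast_mod, div_left_inj' hN, ← ZMod.val_intCast,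
    Int.cast_natCast, Nat.cast_inj, (ZMod.val_injective N).eq_iff, eq_comm]

theorem natCast_mul_eq_zero_of_castHom_eq_zero {k l d : ℕ} (hkl : k ∣ l) (hld : l ∣ d * k)
    {z : ZMod l} (hz : ZMod.castHom hkl (ZMod k) z = 0) : (d : ZMod l) * z = 0 := by
  obtain ⟨c, rfl⟩ := ZMod.intCast_surjective z
  rw [map_intCast, ZMod.intCast_zmod_eq_zero_iff_dvd] at hz
  have hlc : (l : ℤ) ∣ d * c :=
    calc (l : ℤ) ∣ d * k := mod_cast hld
      _ ∣ d * c := mul_dvd_mul_left _ hz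
  exact mod_cast (ZMod.intCast_zmod_eq_zero_iff_dvd _ _).2 hlc

theorem Confining.of_addSubgroup {n : ℕ} (hn : n ≠ 0) {A : AddSubgroup ℚ}
    (hA : ∀ x ∈ A, inH n x) (hint : ∀ m : ℤ, (m : ℚ) ∈ A) : Confining n A := by
  refine ⟨hA, fun x hx ↦ ?_, ?_, 0, fun x hx y hy ↦ ?_⟩
  · simpa only [SetLike.mem_coe, nsmul_eq_mul] using A.nsmul_mem hx n
  · rintro _ ⟨a, k, rfl⟩
    have hnk : (n : ℚ) ^ k ≠ 0 := by positivity
    exact ⟨k, by simpa only [SetLike.mem_coe, mul_div_cancel₀ _ hnk] using hint a⟩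
  · simpa only [SetLike.mem_coe, pow_zero, one_mul] using A.add_mem hx hy

/-- The underlying additive group of an ideal of `ℤ_n`. -/
def IsZnIdeal.toAddSubgroup {n : ℕ} {I : Set (∀ l : ℕ, ZMod (n ^ l))} (hI : IsZnIdeal n I) :
    AddSubgroup (∀ l : ℕ, ZMod (n ^ l)) where
  carrier := I
  zero_mem' := hI.2.1
  add_mem' hx hy := hI.2.2.1 _ hx _ hy
  neg_mem' {x} hx := by
    have hneg : ZnMem n (-1) := fun k l h ↦ by
      simp only [Pi.neg_apply, Pi.one_apply, map_neg, map_one]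
    simpa only [neg_one_mul] using hI.2.2.2 (-1) hneg x hx

section LevelSubgroup

variable {n : ℕ} (G : AddSubgroup (∀ l : ℕ, ZMod (n ^ l)))

/-- The part of `S(G)` of denominator `n ^ s`: the `x` for which `n ^ s * x` is an integer whose
residue modulo `n ^ s` is the `s`-th coordinate of an element of `G`. -/
def levelSubgroup (s : ℕ) : AddSubgroup ℚ :=
  (((G.map (Pi.evalAddMonoidHom _ s)).comap (Int.castAddHom (ZMod (n ^ s)))).map
    (Int.castAddHom ℚ)).comap (AddMonoidHom.mulLeft ((n : ℚ) ^ s))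

variable {G} {s : ℕ} {x : ℚ}

theorem mem_levelSubgroup :
    x ∈ levelSubgroup G s ↔ ∃ m : ℤ, (∃ b ∈ G, b s = m) ∧ (m : ℚ) = (n : ℚ) ^ s * x :=
  Iff.rfl

theorem intCast_mem_levelSubgroup_zero (m : ℤ) : (m : ℚ) ∈ levelSubgroup G 0 := by
  have : Subsingleton (ZMod (n ^ 0)) := inferInstanceAs (Subsingleton (ZMod 1))
  exact mem_levelSubgroup.2 ⟨m, ⟨0, G.zero_mem, Subsingleton.elim _ _⟩, by simp⟩

theorem levelSubgroup_mono (hG : ∀ b ∈ G, ZnMem n b) : Monotone (levelSubgroup G) := by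
  refine monotone_nat_of_le_succ fun s x hx ↦ ?_
  obtain ⟨m, ⟨b, hb, hbm⟩, hmx⟩ := mem_levelSubgroup.1 hx
  have hlift : (n : ZMod (n ^ (s + 1))) * (b (s + 1) - m) = 0 := by
    refine natCast_mul_eq_zero_of_castHom_eq_zero (pow_dvd_pow n s.le_succ) (pow_succ' n s).dvd ?_
    rw [map_sub, map_intCast, hG b hb s (s + 1) s.le_succ, hbm, sub_self]
  refine mem_levelSubgroup.2 ⟨n * m, ⟨n • b, G.nsmul_mem hb n, ?_⟩, ?_⟩
  · rw [mul_sub, sub_eq_zero] at hlift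
    rw [Pi.smul_apply, nsmul_eq_mul, hlift]
    norm_cast
  · push_cast
    rw [hmx]
    ring

theorem inH_of_mem_levelSubgroup (hn : n ≠ 0) (hx : x ∈ levelSubgroup G s) : inH n x := by
  obtain ⟨m, -, hmx⟩ := mem_levelSubgroup.1 hx
  have hns : (n : ℚ) ^ s ≠ 0 := by positivity
  exact ⟨m, s, by rw [hmx, mul_div_cancel_left₀ _ hns]⟩

theorem mem_levelSubgroup_iff_fract (hn : n ≠ 0) :
    x ∈ levelSubgroup G s ↔ (∃ m : ℤ, (n : ℚ) ^ s * x = m) ∧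
      ∃ b ∈ G, Int.fract x = ((b s).val : ℚ) / (n : ℚ) ^ s := by
  have : NeZero (n ^ s) := ⟨pow_ne_zero s hn⟩
  have hns : (n : ℚ) ^ s ≠ 0 := by positivity
  have residue_iff (m : ℤ) (hmx : (n : ℚ) ^ s * x = m) (z : ZMod (n ^ s)) :
      Int.fract x = (z.val : ℚ) / (n : ℚ) ^ s ↔ z = m := by
    rw [eq_div_of_mul_eq hns ((mul_comm _ _).trans hmx), ← Nat.cast_pow,
      fract_intCast_div_eq_val_div_iff]
  rw [mem_levelSubgroup]
  constructor
  · rintro ⟨m, ⟨b, hb, hbm⟩, hmx⟩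
    exact ⟨⟨m, hmx.symm⟩, b, hb, (residue_iff m hmx.symm _).2 hbm⟩
  · rintro ⟨⟨m, hmx⟩, b, hb, hfract⟩
    exact ⟨m, ⟨b, hb, (residue_iff m hmx _).1 hfract⟩, hmx.symm⟩

theorem mem_SIdeal_iff_exists_mem_levelSubgroup (hn : n ≠ 0) :
    x ∈ SIdeal n G ↔ ∃ s, x ∈ levelSubgroup G s := by
  constructor
  · rintro ⟨-, s, ⟨m, hmx⟩, hfract⟩
    have habs : (n : ℚ) ^ s * |x| = (|m| : ℤ) := by
      rw [Int.cast_abs, ← hmx, abs_mul, abs_pow, Nat.abs_cast]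
    exact ⟨s, abs_mem_iff.1 ((mem_levelSubgroup_iff_fract hn).2 ⟨⟨|m|, habs⟩, hfract⟩)⟩
  · rintro ⟨s, hx⟩
    exact ⟨inH_of_mem_levelSubgroup hn hx, s, ((mem_levelSubgroup_iff_fract hn).1 hx).1,
      ((mem_levelSubgroup_iff_fract hn).1 (abs_mem_iff.2 hx)).2⟩

theorem SIdeal_eq_iSup_levelSubgroup (hn : n ≠ 0) (hG : ∀ b ∈ G, ZnMem n b) :
    SIdeal n G = (⨆ s, levelSubgroup G s : AddSubgroup ℚ) := by
  ext x
  rw [mem_SIdeal_iff_exists_mem_levelSubgroup hn, SetLike.mem_coe,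
    AddSubgroup.mem_iSup_of_directed (levelSubgroup_mono hG).directed_le]

end LevelSubgroup

theorem SIdeal_confining_general {n : ℕ} (hn : n ≠ 0) (G : AddSubgroup (∀ l : ℕ, ZMod (n ^ l)))
    (hG : ∀ b ∈ G, ZnMem n b) :
    IsSymmSet (SIdeal n G) ∧ Confining n (SIdeal n G) ∧
      (∀ x ∈ SIdeal n G, ∀ y ∈ SIdeal n G, x + y ∈ SIdeal n G) := by
  have hH : ∀ x ∈ SIdeal n G, inH n x := fun x hx ↦ hx.1
  rw [SIdeal_eq_iSup_levelSubgroup hn hG] at hH ⊢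
  have hint (m : ℤ) : (m : ℚ) ∈ ⨆ s, levelSubgroup G s :=
    AddSubgroup.mem_iSup_of_mem 0 (intCast_mem_levelSubgroup_zero m)
  exact ⟨fun _ ↦ neg_mem, Confining.of_addSubgroup hn hH hint, fun _ hx _ hy ↦ add_mem hx hy⟩

/-- For every ideal `𝔟` of `ℤ_n`, the set `S(𝔟) ⊆ H = ℤ[1/n]` is symmetric and
confining for `H` under the action of `α : x ↦ n·x`; moreover condition (c) of the
definition of confining holds with `k₀ = 0`, i.e. `S(𝔟) + S(𝔟) ⊆ S(𝔟)`. -/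
theorem SIdeal_confining (n : ℕ) (hn : 2 ≤ n) (I : Set (∀ l : ℕ, ZMod (n ^ l)))
    (hI : IsZnIdeal n I) :
    IsSymmSet (SIdeal n I) ∧ Confining n (SIdeal n I) ∧
      (∀ x ∈ SIdeal n I, ∀ y ∈ SIdeal n I, x + y ∈ SIdeal n I) :=
  SIdeal_confining_general (by lia) hI.toAddSubgroup hI.1
end

section
/- Fix an integer n ≥ 2 and let H = ℤ[1/n]. If 𝔞 and 𝔟 are ideals of the ring ℤ_n of n-adic integers with 𝔞 ∼ 𝔟 (i.e., there exists k ≥ 0 with n^k·𝔞 ⊆ 𝔟 and n^k·𝔟 ⊆ 𝔞), then S(𝔞) = S(𝔟). -/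
/-- The element `n` of `ℤ_n` (inside the ambient product ring). -/
def nElem (n : ℕ) : ∀ l : ℕ, ZMod (n ^ l) := fun l => (n : ZMod (n ^ l))

/-!
Multiplication by `n ^ k` in `ℤ_n` shifts `n`-adic expansions by `k` digits, so `n ^ k * b` at
level `s + k` represents the same fraction as `b` at level `s`. A pair `(s, b)` witnessing
`x ∈ S(I)` therefore turns into the witness `(s + k, n ^ k * b)` of `x ∈ S(J)` as soon as
`n ^ k * I ⊆ J`.
-/

/-- The relation `I ≤ J` of the paper: some power of `n` carries `I` into `J`. It is stated for
arbitrary sets, ideals being subsets of the ambient product ring here. -/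
def ZnLE (n : ℕ) (I J : Set (∀ l : ℕ, ZMod (n ^ l))) : Prop :=
  ∃ k : ℕ, ∀ x ∈ I, nElem n ^ k * x ∈ J

section

variable {n : ℕ} [NeZero n]

theorem ZnMem.val_mod_pow {b : ∀ l : ℕ, ZMod (n ^ l)} (hb : ZnMem n b) {k l : ℕ} (hkl : k ≤ l) :
    (b l).val % n ^ k = (b k).val := by
  rw [← hb k l hkl, ZMod.castHom_apply, ZMod.cast_eq_val, ZMod.val_natCast]

theorem ZnMem.val_nElem_pow_mul {b : ∀ l : ℕ, ZMod (n ^ l)} (hb : ZnMem n b) (k s : ℕ) :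
    ((nElem n ^ k * b) (s + k)).val = n ^ k * (b s).val := by
  have natCast_repr :
      (nElem n ^ k * b) (s + k) = ((n ^ k * (b (s + k)).val : ℕ) : ZMod (n ^ (s + k))) := by
    simp [nElem]
  calc ((nElem n ^ k * b) (s + k)).val
      = n ^ k * (b (s + k)).val % (n ^ k * n ^ s) := by
        rw [natCast_repr, ZMod.val_natCast, ← pow_add, add_comm k s]
    _ = n ^ k * ((b (s + k)).val % n ^ s) := Nat.mul_mod_mul_left ..
    _ = n ^ k * (b s).val := by rw [hb.val_mod_pow (Nat.le_add_right s k)]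

theorem ZnMem.val_nElem_pow_mul_div {b : ∀ l : ℕ, ZMod (n ^ l)} (hb : ZnMem n b) (k s : ℕ) :
    (((nElem n ^ k * b) (s + k)).val : ℚ) / (n : ℚ) ^ (s + k) =
      ((b s).val : ℚ) / (n : ℚ) ^ s := by
  have hnk : (n : ℚ) ^ k ≠ 0 := pow_ne_zero k (NeZero.ne _)
  rw [hb.val_nElem_pow_mul, Nat.cast_mul, Nat.cast_pow, add_comm, pow_add,
    mul_div_mul_left _ _ hnk]

theorem SIdeal_subset_of_znLE {I J : Set (∀ l : ℕ, ZMod (n ^ l))} (hI : ∀ x ∈ I, ZnMem n x)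
    (hIJ : ZnLE n I J) : SIdeal n I ⊆ SIdeal n J := by
  obtain ⟨k, hk⟩ := hIJ
  rintro x ⟨hx, s, ⟨m, hm⟩, b, hb, hfract⟩
  have integral : (n : ℚ) ^ (s + k) * x = ((n ^ k * m : ℤ) : ℚ) := by
    push_cast
    rw [← hm]
    ring
  exact ⟨hx, s + k, ⟨n ^ k * m, integral⟩, nElem n ^ k * b, hk b hb,
    hfract.trans ((hI b hb).val_nElem_pow_mul_div k s).symm⟩

theorem SIdeal_eq_of_equiv_general {I J : Set (∀ l : ℕ, ZMod (n ^ l))}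
    (hI : ∀ x ∈ I, ZnMem n x) (hJ : ∀ x ∈ J, ZnMem n x) (hIJ : ZnLE n I J) (hJI : ZnLE n J I) :
    SIdeal n I = SIdeal n J :=
  (SIdeal_subset_of_znLE hI hIJ).antisymm (SIdeal_subset_of_znLE hJ hJI)

end

/-- If `𝔞 ∼ 𝔟` are equivalent ideals of `ℤ_n` (there exists `k ≥ 0` with
`n^k·𝔞 ⊆ 𝔟` and `n^k·𝔟 ⊆ 𝔞`), then `S(𝔞) = S(𝔟)`. -/
theorem SIdeal_eq_of_equiv (n : ℕ) (hn : 2 ≤ n) (I J : Set (∀ l : ℕ, ZMod (n ^ l)))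
    (hI : IsZnIdeal n I) (hJ : IsZnIdeal n J)
    (hIJ : ∃ k : ℕ, (∀ x ∈ I, nElem n ^ k * x ∈ J) ∧ (∀ x ∈ J, nElem n ^ k * x ∈ I)) :
    SIdeal n I = SIdeal n J := by
  have : NeZero n := .of_gt hn
  obtain ⟨k, hI_le, hJ_le⟩ := hIJ
  exact SIdeal_eq_of_equiv_general hI.1 hJ.1 ⟨k, hI_le⟩ ⟨k, hJ_le⟩
end

section
/- Fix an integer n ≥ 2 with prime factorization n = p_1^{n_1}···p_k^{n_k}. For every ideal 𝔞 of the ring ℤ_n of n-adic integers there exists a unique subset A ⊆ {1,…,k} such that 𝔞 ∼ I_A, where I_A is the full ideal associated to A. In particular, every equivalence class of ideals of ℤ_n under ∼ contains exactly one full ideal. -/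
/-- `𝔞 ≤ 𝔟` for ideals of `ℤ_n`: `n^k·𝔞 ⊆ 𝔟` for some `k ≥ 0`. -/
def IdealLe (n : ℕ) (I J : Set (∀ l : ℕ, ZMod (n ^ l))) : Prop :=
  ∃ k : ℕ, ∀ x ∈ I, nElem n ^ k * x ∈ J

/-- `𝔞 ∼ 𝔟` for ideals of `ℤ_n`: `𝔞 ≤ 𝔟` and `𝔟 ≤ 𝔞`. -/
def IdealEquiv (n : ℕ) (I J : Set (∀ l : ℕ, ZMod (n ^ l))) : Prop :=
  IdealLe n I J ∧ IdealLe n J I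

/-- The full ideal `I_A` of `ℤ_n` associated to a set `A` of indices of prime factors
`p i` (with multiplicities `e i`) of `n`: the elements `x ∈ ℤ_n` such that
`p_i^{e_i·l}` divides `v_l(x)` for every `i ∈ A` and every `l ≥ 1`. -/
def FullIdeal (n : ℕ) {k : ℕ} (p e : Fin k → ℕ) (A : Set (Fin k)) :
    Set (∀ l : ℕ, ZMod (n ^ l)) :=
  {x | ZnMem n x ∧ ∀ i ∈ A, ∀ l : ℕ, 1 ≤ l → (p i) ^ (e i * l) ∣ (x l).val}

/-!
By the Chinese remainder theorem `ℤ_n` is the product of the rings `ℤ_[p i]`. In each factor `n` is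
nonzero and every nonzero element divides a power of `n`, so a nonzero ideal of a factor is
equivalent to the whole factor. An ideal `J` of the product is therefore equivalent to the ideal
cut out by the coordinates that vanish identically on `J`, and this set of coordinates is an
invariant of the equivalence class.
-/

section PowEquiv

variable {R S : Type*} [Semiring R] [Semiring S]

/-- The preorder `J ≤ K` of the paper, for ideals of an arbitrary ring and with an arbitrary ring
element `a` in place of `n`: some power of `a` multiplies `J` into `K`. -/
def PowLE (a : R) (J K : Ideal R) : Prop :=
  ∃ m : ℕ, ∀ x ∈ J, a ^ m * x ∈ K

/-- The equivalence relation `J ∼ K` associated to the preorder `PowLE a`. -/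
def PowEquiv (a : R) (J K : Ideal R) : Prop :=
  PowLE a J K ∧ PowLE a K J

theorem PowLE.of_le (a : R) {J K : Ideal R} (h : J ≤ K) : PowLE a J K :=
  ⟨0, fun x hx => by simpa using h hx⟩

theorem powLE_comap_iff (φ : R ≃+* S) {a : R} {J K : Ideal S} :
    PowLE a (J.comap φ) (K.comap φ) ↔ PowLE (φ a) J K := by
  simp only [PowLE, Ideal.mem_comap, φ.surjective.forall, map_mul, map_pow]

theorem powEquiv_comap_iff (φ : R ≃+* S) {a : R} {J K : Ideal S} :
    PowEquiv a (J.comap φ) (K.comap φ) ↔ PowEquiv (φ a) J K :=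
  and_congr (powLE_comap_iff φ) (powLE_comap_iff φ)

end PowEquiv

section PiIdeals

variable {ι : Type*} {R : ι → Type*} [∀ i, CommSemiring (R i)]

variable (R) in
/-- The ideal of a product ring cut out by the vanishing of the coordinates in `A`. -/
def piVanishingIdeal (A : Set ι) : Ideal (Π i, R i) :=
  ⨅ i ∈ A, RingHom.ker (Pi.evalRingHom R i)

/-- The set of coordinates that vanish identically on an ideal of a product ring. -/
def vanishingCoords (J : Ideal (Π i, R i)) : Set ι :=
  {i | ∀ x ∈ J, x i = 0}

theorem mem_piVanishingIdeal {A : Set ι} {x : Π i, R i} :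
    x ∈ piVanishingIdeal R A ↔ ∀ i ∈ A, x i = 0 := by
  simp [piVanishingIdeal, RingHom.mem_ker]

theorem le_piVanishingIdeal_vanishingCoords (J : Ideal (Π i, R i)) :
    J ≤ piVanishingIdeal R (vanishingCoords J) :=
  fun x hx => mem_piVanishingIdeal.2 fun _ hi => hi x hx

theorem vanishingCoords_piVanishingIdeal [∀ i, Nontrivial (R i)] (A : Set ι) :
    vanishingCoords (piVanishingIdeal R A) = A := by
  classical
  refine Set.Subset.antisymm (fun i hi => ?_) fun i hi x hx => mem_piVanishingIdeal.1 hx i hi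
  by_contra hiA
  have hmem : Pi.single i 1 ∈ piVanishingIdeal R A :=
    mem_piVanishingIdeal.2 fun j hj => Pi.single_eq_of_ne (ne_of_mem_of_not_mem hj hiA) 1
  simpa using hi _ hmem

theorem PowLE.vanishingCoords_subset [∀ i, NoZeroDivisors (R i)] {a : Π i, R i}
    (ha : ∀ i, a i ≠ 0) {J K : Ideal (Π i, R i)} (h : PowLE a J K) :
    vanishingCoords K ⊆ vanishingCoords J := by
  obtain ⟨m, hm⟩ := h
  intro i hi x hx
  have hzero : a i ^ m * x i = 0 := hi _ (hm x hx)
  exact (mul_eq_zero.1 hzero).resolve_left (pow_ne_zero m (ha i))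

theorem PowEquiv.vanishingCoords_eq [∀ i, NoZeroDivisors (R i)] {a : Π i, R i}
    (ha : ∀ i, a i ≠ 0) {J K : Ideal (Π i, R i)} (h : PowEquiv a J K) :
    vanishingCoords J = vanishingCoords K :=
  (h.2.vanishingCoords_subset ha).antisymm (h.1.vanishingCoords_subset ha)

theorem exists_single_pow_mem [DecidableEq ι] {J : Ideal (Π i, R i)} {i : ι} {b : R i}
    (hb : ∀ x : R i, x ≠ 0 → ∃ m : ℕ, x ∣ b ^ m) (hi : i ∉ vanishingCoords J) :
    ∃ m : ℕ, Pi.single i (b ^ m) ∈ J := by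
  obtain ⟨x, hxJ, hx⟩ : ∃ x ∈ J, x i ≠ 0 := by simpa [vanishingCoords] using hi
  obtain ⟨m, c, hc⟩ := hb (x i) hx
  refine ⟨m, ?_⟩
  rw [hc, mul_comm, Pi.single_mul_left]
  exact J.mul_mem_left _ hxJ

theorem exists_single_pow_mul_mem [DecidableEq ι] {J : Ideal (Π i, R i)} {i : ι} {b : R i}
    (hb : ∀ x : R i, x ≠ 0 → ∃ m : ℕ, x ∣ b ^ m) :
    ∃ m : ℕ, ∀ y ∈ piVanishingIdeal R (vanishingCoords J), Pi.single i (b ^ m * y i) ∈ J := by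
  by_cases hi : i ∈ vanishingCoords J
  · refine ⟨0, fun y hy => ?_⟩
    rw [mem_piVanishingIdeal.1 hy i hi, mul_zero, Pi.single_zero]
    exact J.zero_mem
  · obtain ⟨m, hm⟩ := exists_single_pow_mem hb hi
    refine ⟨m, fun y _ => ?_⟩
    rw [Pi.single_mul_left]
    exact J.mul_mem_right _ hm

theorem piVanishingIdeal_vanishingCoords_powLE [Finite ι] {a : Π i, R i}
    (ha : ∀ i, ∀ x : R i, x ≠ 0 → ∃ m : ℕ, x ∣ a i ^ m) (J : Ideal (Π i, R i)) :
    PowLE a (piVanishingIdeal R (vanishingCoords J)) J := by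
  classical
  cases nonempty_fintype ι
  choose m hm using fun i => exists_single_pow_mul_mem (J := J) (ha i)
  refine ⟨∑ i, m i, fun y hy => ?_⟩
  rw [← Finset.univ_sum_single (a ^ (∑ i, m i) * y)]
  refine J.sum_mem fun i _ => ?_
  have hle : m i ≤ ∑ j, m j := Finset.single_le_sum (fun _ _ => Nat.zero_le _) (Finset.mem_univ i)
  have hsplit : (a ^ (∑ j, m j) * y) i = a i ^ (∑ j, m j - m i) * (a i ^ m i * y i) := by
    rw [← mul_assoc, pow_sub_mul_pow _ hle, Pi.mul_apply, Pi.pow_apply]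
  rw [hsplit, Pi.single_mul]
  exact J.mul_mem_left _ (hm i y hy)

theorem existsUnique_powEquiv_comap_piVanishingIdeal [Finite ι]
    [∀ i, NoZeroDivisors (R i)] {S : Type*} [Semiring S] (φ : S ≃+* Π i, R i) {a : S}
    (ha : ∀ i, φ a i ≠ 0) (hdvd : ∀ i, ∀ x : R i, x ≠ 0 → ∃ m : ℕ, x ∣ φ a i ^ m) (J : Ideal S) :
    ∃! A : Set ι, PowEquiv a J ((piVanishingIdeal R A).comap φ) := by
  obtain ⟨K, rfl⟩ : ∃ K : Ideal (Π i, R i), K.comap φ = J :=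
    ⟨J.comap φ.symm, by ext x; simp [Ideal.mem_comap]⟩
  simp only [powEquiv_comap_iff]
  refine ⟨vanishingCoords K, ⟨.of_le _ (le_piVanishingIdeal_vanishingCoords K),
    piVanishingIdeal_vanishingCoords_powLE hdvd K⟩, fun A hA => ?_⟩
  have (i : ι) : Nontrivial (R i) := nontrivial_of_ne _ _ (ha i)
  rw [hA.vanishingCoords_eq ha, vanishingCoords_piVanishingIdeal]

end PiIdeals

section ZMod

theorem castHom_castHom_apply {a b c : ℕ} (hab : a ∣ b) (hbc : b ∣ c) (x : ZMod c) :
    ZMod.castHom hab (ZMod a) (ZMod.castHom hbc (ZMod b) x)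
      = ZMod.castHom (hab.trans hbc) (ZMod a) x :=
  RingHom.congr_fun (ZMod.castHom_comp hab hbc) x

theorem castHom_eq_zero_iff_dvd_val {m N : ℕ} [NeZero N] (h : m ∣ N) (x : ZMod N) :
    ZMod.castHom h (ZMod m) x = 0 ↔ m ∣ x.val := by
  rw [ZMod.castHom_apply, ← ZMod.natCast_val, ZMod.natCast_eq_zero_iff]

theorem castHom_pi_bijective {ι : Type*} [Fintype ι] {N : ℕ} {a : ι → ℕ}
    (ha : Pairwise (Function.onFun Nat.Coprime a)) (hN : N = ∏ i, a i) (hdvd : ∀ i, a i ∣ N) :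
    Function.Bijective fun (x : ZMod N) i => ZMod.castHom (hdvd i) (ZMod (a i)) x := by
  subst hN
  convert (ZMod.prodEquivPi a ha).bijective using 1
  ext x i
  rw [ZMod.prodEquivPi_apply]

end ZMod

section PadicInt

variable {p : ℕ} [Fact p.Prime]

theorem padicInt_ext_of_toZModPow_mul {e : ℕ} (he : 1 ≤ e) {x y : ℤ_[p]}
    (h : ∀ l : ℕ, 1 ≤ l → PadicInt.toZModPow (e * l) x = PadicInt.toZModPow (e * l) y) :
    x = y := by
  refine PadicInt.ext_of_toZModPow.1 fun m => ?_
  have hm : m ≤ e * (m + 1) := m.le_succ.trans (Nat.le_mul_of_pos_left _ he)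
  rw [← PadicInt.cast_toZModPow m _ hm x, ← PadicInt.cast_toZModPow m _ hm y,
    h (m + 1) m.succ_pos]

theorem padicInt_exists_dvd_natCast_pow {n : ℕ} (hpn : p ∣ n) {x : ℤ_[p]} (hx : x ≠ 0) :
    ∃ m : ℕ, x ∣ (n : ℤ_[p]) ^ m := by
  have hxp : x ∣ (p : ℤ_[p]) ^ x.valuation :=
    Units.dvd_mul_left.1 (PadicInt.unitCoeff_spec hx).dvd
  exact ⟨x.valuation, hxp.trans (pow_dvd_pow_of_dvd (Nat.cast_dvd_cast hpn) _)⟩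

end PadicInt

section ZnSubring

variable {n : ℕ}

/-- The ring `ℤ_n`, as a subring of `∏ l, ℤ/n^lℤ`. -/
def znSubring (n : ℕ) : Subring (∀ l : ℕ, ZMod (n ^ l)) where
  carrier := {x | ZnMem n x}
  mul_mem' ha hb k l h := by rw [Pi.mul_apply, map_mul, ha k l h, hb k l h, Pi.mul_apply]
  one_mem' k l h := map_one _
  add_mem' ha hb k l h := by rw [Pi.add_apply, map_add, ha k l h, hb k l h, Pi.add_apply]
  zero_mem' k l h := map_zero _
  neg_mem' ha k l h := by rw [Pi.neg_apply, map_neg, ha k l h, Pi.neg_apply]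

theorem IsZnIdeal.exists_ideal {I : Set (∀ l : ℕ, ZMod (n ^ l))} (hI : IsZnIdeal n I) :
    ∃ J : Ideal (znSubring n), Subtype.val '' (J : Set (znSubring n)) = I := by
  obtain ⟨hmem, hzero, hadd, hmul⟩ := hI
  let J : Ideal (znSubring n) :=
    { carrier := {x | x.1 ∈ I}
      zero_mem' := hzero
      add_mem' := fun hx hy => hadd _ hx _ hy
      smul_mem' := fun r x hx => hmul r.1 r.2 x.1 hx }
  refine ⟨J, Set.Subset.antisymm ?_ fun x hx => ⟨⟨x, hmem x hx⟩, hx, rfl⟩⟩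
  rintro _ ⟨x, hx, rfl⟩
  exact hx

theorem idealLe_image_iff {J K : Ideal (znSubring n)} :
    IdealLe n (Subtype.val '' (J : Set (znSubring n))) (Subtype.val '' (K : Set (znSubring n)))
      ↔ PowLE (n : znSubring n) J K := by
  refine exists_congr fun m => Set.forall_mem_image.trans (forall₂_congr fun x _ => ?_)
  exact Subtype.val_injective.mem_set_image (a := (n : znSubring n) ^ m * x)

theorem idealEquiv_image_iff {J K : Ideal (znSubring n)} :
    IdealEquiv n (Subtype.val '' (J : Set (znSubring n))) (Subtype.val '' (K : Set (znSubring n)))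
      ↔ PowEquiv (n : znSubring n) J K :=
  and_congr idealLe_image_iff idealLe_image_iff

end ZnSubring

section ToPadic

variable {n p : ℕ}

/-- The coordinate `x_m` of `x ∈ ℤ_n`, reduced modulo `p ^ m`. -/
def residueModPow (hpn : p ∣ n) (m : ℕ) : znSubring n →+* ZMod (p ^ m) :=
  ((ZMod.castHom (pow_dvd_pow_of_dvd hpn m) (ZMod (p ^ m))).comp
    (Pi.evalRingHom (fun l : ℕ => ZMod (n ^ l)) m)).comp (znSubring n).subtype

theorem residueModPow_eq_castHom (hpn : p ∣ n) {m l : ℕ} (h : p ^ m ∣ n ^ l) (x : znSubring n) :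
    residueModPow hpn m x = ZMod.castHom h (ZMod (p ^ m)) (x.1 l) := by
  change ZMod.castHom (pow_dvd_pow_of_dvd hpn m) (ZMod (p ^ m)) (x.1 m) = _
  rcases le_total m l with hml | hlm
  · rw [← x.2 m l hml, castHom_castHom_apply]
  · rw [← x.2 l m hlm, castHom_castHom_apply]

theorem castHom_comp_residueModPow (hpn : p ∣ n) (m l : ℕ) (hml : m ≤ l) :
    (ZMod.castHom (pow_dvd_pow p hml) (ZMod (p ^ m))).comp (residueModPow hpn l)
      = residueModPow hpn m := by
  ext x
  have hdvd : p ^ l ∣ n ^ l := pow_dvd_pow_of_dvd hpn l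
  rw [RingHom.comp_apply, residueModPow_eq_castHom hpn hdvd, castHom_castHom_apply,
    ← residueModPow_eq_castHom hpn]

variable [Fact p.Prime]

/-- The projection of `ℤ_n` onto its `p`-adic factor. -/
noncomputable def toPadic (hpn : p ∣ n) : znSubring n →+* ℤ_[p] :=
  PadicInt.lift (castHom_comp_residueModPow hpn)

theorem toZModPow_toPadic (hpn : p ∣ n) {m l : ℕ} (h : p ^ m ∣ n ^ l) (x : znSubring n) :
    PadicInt.toZModPow m (toPadic hpn x) = ZMod.castHom h (ZMod (p ^ m)) (x.1 l) :=
  (RingHom.congr_fun (PadicInt.lift_spec (castHom_comp_residueModPow hpn) m) x).trans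
    (residueModPow_eq_castHom hpn h x)

theorem toPadic_eq_zero_iff [NeZero n] (hpn : p ∣ n) {e : ℕ} (he : 1 ≤ e) (hpe : p ^ e ∣ n)
    (x : znSubring n) :
    toPadic hpn x = 0 ↔ ∀ l : ℕ, 1 ≤ l → p ^ (e * l) ∣ (x.1 l).val := by
  have hdvd (l : ℕ) : p ^ (e * l) ∣ n ^ l := pow_mul p e l ▸ pow_dvd_pow_of_dvd hpe l
  have hcoord (l : ℕ) : PadicInt.toZModPow (e * l) (toPadic hpn x) = 0 ↔
      p ^ (e * l) ∣ (x.1 l).val := by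
    rw [toZModPow_toPadic hpn (hdvd l), castHom_eq_zero_iff_dvd_val]
  simp only [← hcoord]
  exact ⟨fun h l _ => by rw [h, map_zero],
    fun h => padicInt_ext_of_toZModPow_mul he fun l hl => by rw [h l hl, map_zero]⟩

end ToPadic

section Factorization

variable {ι : Type*} [Fintype ι] {n : ℕ} {p e : ι → ℕ}

theorem pow_dvd_of_eq_prod_pow (hfact : n = ∏ i, p i ^ e i) (i : ι) : p i ^ e i ∣ n :=
  hfact ▸ Finset.dvd_prod_of_mem (fun i => p i ^ e i) (Finset.mem_univ i)

theorem dvd_of_eq_prod_pow (he : ∀ i, 1 ≤ e i) (hfact : n = ∏ i, p i ^ e i) (i : ι) : p i ∣ n :=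
  (dvd_pow_self _ (Nat.one_le_iff_ne_zero.1 (he i))).trans (pow_dvd_of_eq_prod_pow hfact i)

theorem pow_mul_dvd_pow_of_eq_prod_pow (hfact : n = ∏ i, p i ^ e i) (i : ι) (l : ℕ) :
    p i ^ (e i * l) ∣ n ^ l :=
  pow_mul (p i) (e i) l ▸ pow_dvd_pow_of_dvd (pow_dvd_of_eq_prod_pow hfact i) l

theorem castHom_pi_pow_bijective (hp : ∀ i, (p i).Prime) (hinj : Function.Injective p)
    (hfact : n = ∏ i, p i ^ e i) (l : ℕ) :
    Function.Bijective fun (x : ZMod (n ^ l)) i =>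
      ZMod.castHom (pow_mul_dvd_pow_of_eq_prod_pow hfact i l) (ZMod (p i ^ (e i * l))) x := by
  refine castHom_pi_bijective (fun i j hij => ?_) ?_ _
  · exact Nat.coprime_pow_primes _ _ (hp i) (hp j) (hinj.ne hij)
  · simp only [hfact, ← Finset.prod_pow, pow_mul]

variable [∀ i, Fact (p i).Prime]

theorem toPadic_pi_injective (he : ∀ i, 1 ≤ e i) (hinj : Function.Injective p)
    (hfact : n = ∏ i, p i ^ e i) :
    Function.Injective fun (x : znSubring n) i => toPadic (dvd_of_eq_prod_pow he hfact i) x := by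
  intro x y hxy
  refine Subtype.ext (funext fun l => ?_)
  refine (castHom_pi_pow_bijective (fun i => Fact.out) hinj hfact l).injective (funext fun i => ?_)
  have hxyi : toPadic (dvd_of_eq_prod_pow he hfact i) x = toPadic _ y := congrFun hxy i
  have hdvd := pow_mul_dvd_pow_of_eq_prod_pow hfact i l
  exact (toZModPow_toPadic _ hdvd x).symm.trans (hxyi ▸ toZModPow_toPadic _ hdvd y)

theorem exists_znMem_castHom_eq_toZModPow (hinj : Function.Injective p)
    (hfact : n = ∏ i, p i ^ e i) (y : Π i, ℤ_[p i]) :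
    ∃ x, ZnMem n x ∧ ∀ l i, ZMod.castHom (pow_mul_dvd_pow_of_eq_prod_pow hfact i l)
      (ZMod (p i ^ (e i * l))) (x l) = PadicInt.toZModPow (e i * l) (y i) := by
  have hbij := castHom_pi_pow_bijective (fun i => Fact.out) hinj hfact
  choose x hxl using fun l => (hbij l).surjective fun i => PadicInt.toZModPow (e i * l) (y i)
  have hx (l : ℕ) (i : ι) : ZMod.castHom (pow_mul_dvd_pow_of_eq_prod_pow hfact i l)
      (ZMod (p i ^ (e i * l))) (x l) = PadicInt.toZModPow (e i * l) (y i) := congrFun (hxl l) i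
  refine ⟨x, fun m l hml => (hbij m).injective (funext fun i => ?_), hx⟩
  have hle : e i * m ≤ e i * l := Nat.mul_le_mul_left _ hml
  calc
    ZMod.castHom (pow_mul_dvd_pow_of_eq_prod_pow hfact i m) _
          (ZMod.castHom (pow_dvd_pow n hml) _ (x l))
      = ZMod.castHom (pow_dvd_pow (p i) hle) (ZMod (p i ^ (e i * m)))
          (ZMod.castHom (pow_mul_dvd_pow_of_eq_prod_pow hfact i l) _ (x l)) := by
      simp only [castHom_castHom_apply]
    _ = PadicInt.toZModPow (e i * m) (y i) := by
      rw [hx l i, ZMod.castHom_apply, PadicInt.cast_toZModPow _ _ hle]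
    _ = ZMod.castHom (pow_mul_dvd_pow_of_eq_prod_pow hfact i m) _ (x m) := (hx m i).symm

theorem toPadic_pi_surjective (he : ∀ i, 1 ≤ e i) (hinj : Function.Injective p)
    (hfact : n = ∏ i, p i ^ e i) :
    Function.Surjective fun (x : znSubring n) i => toPadic (dvd_of_eq_prod_pow he hfact i) x := by
  intro y
  obtain ⟨x, hxmem, hx⟩ := exists_znMem_castHom_eq_toZModPow hinj hfact y
  refine ⟨⟨x, hxmem⟩, funext fun i => padicInt_ext_of_toZModPow_mul (he i) fun l _ => ?_⟩
  rw [toZModPow_toPadic _ (pow_mul_dvd_pow_of_eq_prod_pow hfact i l), hx l i]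

/-- The decomposition of `ℤ_n` into its `p`-adic factors, for `p` running over the primes that
divide `n`. -/
noncomputable def znPadicEquiv (he : ∀ i, 1 ≤ e i) (hinj : Function.Injective p)
    (hfact : n = ∏ i, p i ^ e i) : znSubring n ≃+* Π i, ℤ_[p i] :=
  RingEquiv.ofBijective (RingHom.pi fun i => toPadic (dvd_of_eq_prod_pow he hfact i))
    ⟨toPadic_pi_injective he hinj hfact, toPadic_pi_surjective he hinj hfact⟩

theorem znPadicEquiv_apply (he : ∀ i, 1 ≤ e i) (hinj : Function.Injective p)
    (hfact : n = ∏ i, p i ^ e i) (x : znSubring n) (i : ι) :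
    znPadicEquiv he hinj hfact x i = toPadic (dvd_of_eq_prod_pow he hfact i) x :=
  rfl

end Factorization

theorem fullIdeal_eq_image_comap_piVanishingIdeal {n k : ℕ} [NeZero n] {p e : Fin k → ℕ}
    [∀ i, Fact (p i).Prime] (he : ∀ i, 1 ≤ e i) (hinj : Function.Injective p)
    (hfact : n = ∏ i, p i ^ e i) (A : Set (Fin k)) :
    FullIdeal n p e A = Subtype.val '' (((piVanishingIdeal (fun i => ℤ_[p i]) A).comap
      (znPadicEquiv he hinj hfact) : Ideal (znSubring n)) : Set (znSubring n)) := by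
  have hmem (x : znSubring n) : x.1 ∈ FullIdeal n p e A ↔
      x ∈ (piVanishingIdeal (fun i => ℤ_[p i]) A).comap (znPadicEquiv he hinj hfact) := by
    simp only [Ideal.mem_comap, mem_piVanishingIdeal, znPadicEquiv_apply,
      toPadic_eq_zero_iff _ (he _) (pow_dvd_of_eq_prod_pow hfact _)]
    exact and_iff_right x.2
  ext x
  constructor
  · exact fun hx => ⟨⟨x, hx.1⟩, (hmem ⟨x, hx.1⟩).1 hx, rfl⟩
  · rintro ⟨x, hx, rfl⟩
    exact (hmem x).2 hx

/-- Let `n = p_1^{n_1}⋯p_k^{n_k}` be the prime factorization of `n ≥ 2`. Every ideal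
`𝔞` of `ℤ_n` is equivalent to a unique full ideal: there is a unique `A ⊆ {1,…,k}`
with `𝔞 ∼ I_A`. -/
theorem exists_unique_full_ideal (n : ℕ) (hn : 2 ≤ n) (k : ℕ) (p e : Fin k → ℕ)
    (hp : ∀ i, (p i).Prime) (he : ∀ i, 1 ≤ e i) (hinj : Function.Injective p)
    (hfact : n = ∏ i, p i ^ e i)
    (I : Set (∀ l : ℕ, ZMod (n ^ l))) (hI : IsZnIdeal n I) :
    ∃! A : Set (Fin k), IdealEquiv n I (FullIdeal n p e A) := by
  have : ∀ i, Fact (p i).Prime := fun i => ⟨hp i⟩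
  have : NeZero n := ⟨by omega⟩
  obtain ⟨J, rfl⟩ := hI.exists_ideal
  let φ : znSubring n ≃+* Π i, ℤ_[p i] := znPadicEquiv he hinj hfact
  have hφn (i : Fin k) : φ n i = n := by rw [map_natCast, Pi.natCast_apply]
  have hne (i : Fin k) : φ n i ≠ 0 := by
    rw [hφn]
    exact NeZero.ne _
  have hdvd (i : Fin k) (x : ℤ_[p i]) (hx : x ≠ 0) : ∃ m : ℕ, x ∣ φ n i ^ m := by
    rw [hφn]
    exact padicInt_exists_dvd_natCast_pow (dvd_of_eq_prod_pow he hfact i) hx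
  simp only [fullIdeal_eq_image_comap_piVanishingIdeal he hinj hfact, idealEquiv_image_iff]
  exact existsUnique_powEquiv_comap_piVanishingIdeal φ hne hdvd J
end

section
/- Fix an integer n ≥ 2 and let H = ℤ[1/n]. If Q ⊆ H is a symmetric subset confining for H under the action of α⁻¹ (where α⁻¹(x) = x/n), then there exists k ≥ 0 such that x/n^k ∈ Q for every x ∈ H with |x| < 1 (that is, α^{-k}(Q⁻) ⊆ Q where Q⁻ = {x ∈ H : |x| < 1}). -/
/-!
For `N = n ^ (k₀ + 1)`, conditions (a) and (c) say that `(x + y) / N ∈ Q` whenever `x, y ∈ Q`.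
By (b), a single power `n ^ K` scales all of the digits `0, …, N - 1` into `Q`. By symmetry it is
enough to treat elements of `H` in `[0, 1)`. Such an element has a finite expansion in base `N`, and
reading its digits from the last to the first builds it up by steps `y ↦ (d + y) / N`. These steps
preserve the set of `y` with `y / n ^ K ∈ Q`, so the same `K` serves for every length of the
expansion.
-/

open Filter

theorem eventually_div_pow_mem {G : Type*} [DivisionMonoid G] {Q : Set G} {c x : G}
    (hdiv : ∀ y ∈ Q, y / c ∈ Q) (hx : ∃ k : ℕ, x / c ^ k ∈ Q) :
    ∀ᶠ k : ℕ in atTop, x / c ^ k ∈ Q := by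
  obtain ⟨k, hk⟩ := hx
  filter_upwards [eventually_ge_atTop k] with j hkj
  induction j, hkj using Nat.le_induction with
  | base => exact hk
  | succ j _ ih =>
    rw [pow_succ', div_mul_eq_div_div_swap]
    exact hdiv _ ih

section BaseExpansion

variable {F : Type*} [Semifield F] {P : Set F}

theorem natCast_div_pow_mem_of_forall_digit {N : ℕ} (hN : (N : F) ≠ 0) (hzero : 0 ∈ P)
    (hdigit : ∀ d < N, ∀ y ∈ P, ((d : F) + y) / N ∈ P) {m a : ℕ} (ha : a < N ^ m) :
    (a : F) / (N : F) ^ m ∈ P := by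
  induction m generalizing a with
  | zero => simpa [Nat.lt_one_iff.mp (by simpa using ha)] using hzero
  | succ m ih =>
    have hNm : 0 < N ^ m := pow_pos (Nat.pos_of_ne_zero (by rintro rfl; simp at hN)) m
    have leading_lt : a / N ^ m < N := Nat.div_lt_of_lt_mul (by rwa [← pow_succ])
    have tail_mem : ((a % N ^ m : ℕ) : F) / (N : F) ^ m ∈ P := ih (Nat.mod_lt a hNm)
    have split : (a : F) = (N : F) ^ m * (a / N ^ m : ℕ) + (a % N ^ m : ℕ) := by
      rw [← Nat.cast_pow, ← Nat.cast_mul, ← Nat.cast_add, Nat.div_add_mod]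
    convert hdigit _ leading_lt _ tail_mem using 1
    rw [split, pow_succ]
    field_simp

theorem natCast_div_pow_mem_of_forall_digit_pow {n l : ℕ} (hn : (n : F) ≠ 0) (hzero : 0 ∈ P)
    (hdigit : ∀ d < n ^ (l + 1), ∀ y ∈ P, ((d : F) + y) / (n : F) ^ (l + 1) ∈ P)
    {k a : ℕ} (ha : a < n ^ k) : (a : F) / (n : F) ^ k ∈ P := by
  have hn_pos : 0 < n := Nat.pos_of_ne_zero (by rintro rfl; simp at hn)
  have ha_pow : a * n ^ (l * k) < (n ^ (l + 1)) ^ k := by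
    rw [← pow_mul, add_one_mul, add_comm, pow_add]
    gcongr
  have hmem := natCast_div_pow_mem_of_forall_digit (P := P) (by simpa using pow_ne_zero (l + 1) hn)
    hzero (by simpa using hdigit) ha_pow
  convert hmem using 1
  push_cast
  rw [← pow_mul, add_one_mul, pow_add]
  field_simp

end BaseExpansion

theorem ConfiningInv.exists_natCast_div_pow_mem {n : ℕ} {Q : Set ℚ} (hQ : ConfiningInv n Q)
    (hn : n ≠ 0) :
    ∃ K : ℕ, ∀ a k : ℕ, a < n ^ k → (a : ℚ) / (n : ℚ) ^ k / (n : ℚ) ^ K ∈ Q := by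
  obtain ⟨-, hdiv, habsorb, k₀, hadd⟩ := hQ
  have eventually_mem (d : ℕ) : ∀ᶠ K : ℕ in atTop, (d : ℚ) / (n : ℚ) ^ K ∈ Q :=
    eventually_div_pow_mem hdiv (habsorb d ⟨d, 0, by simp⟩)
  obtain ⟨K, hK⟩ : ∃ K : ℕ, ∀ d < n ^ (k₀ + 1), (d : ℚ) / (n : ℚ) ^ K ∈ Q :=
    ((eventually_all_finite (Set.finite_Iio (n ^ (k₀ + 1)))).mpr fun d _ ↦ eventually_mem d).exists
  refine ⟨K, fun a k ha ↦ natCast_div_pow_mem_of_forall_digit_pow (l := k₀)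
    (P := {x : ℚ | x / (n : ℚ) ^ K ∈ Q}) (Nat.cast_ne_zero.mpr hn) ?_ ?_ ha⟩
  · simpa using hK 0 (by positivity)
  · intro d hd y hy
    change ((d : ℚ) + y) / (n : ℚ) ^ (k₀ + 1) / (n : ℚ) ^ K ∈ Q
    convert hdiv _ (hadd _ (hK d hd) _ hy) using 1
    ring

theorem inH.exists_abs_eq_natCast_div_pow {n : ℕ} {x : ℚ} (hx : inH n x) :
    ∃ a k : ℕ, |x| = (a : ℚ) / (n : ℚ) ^ k := by
  obtain ⟨a, k, rfl⟩ := hx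
  exact ⟨a.natAbs, k, by simp [abs_div, Nat.cast_natAbs]⟩

theorem IsSymmSet.div_mem_of_abs_div_mem {Q : Set ℚ} (hQ : IsSymmSet Q) {x c : ℚ}
    (hx : |x| / c ∈ Q) : x / c ∈ Q := by
  obtain h | h := abs_choice x
  · rwa [h] at hx
  · simpa [h, neg_div] using hQ _ hx

/-- If `Q ⊆ H = ℤ[1/n]` is a symmetric confining subset under `α⁻¹ : x ↦ x/n`, then
`α^{-k}(Q⁻) ⊆ Q` for some `k ≥ 0`, where `Q⁻ = {x ∈ H : |x| < 1}`. -/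
theorem Qminus_iterate_subset (n : ℕ) (hn : 2 ≤ n) (Q : Set ℚ)
    (hQsymm : IsSymmSet Q) (hQconf : ConfiningInv n Q) :
    ∃ k : ℕ, ∀ x : ℚ, inH n x → |x| < 1 → x / (n : ℚ) ^ k ∈ Q := by
  have hn_ne : n ≠ 0 := by lia
  obtain ⟨K, hK⟩ := hQconf.exists_natCast_div_pow_mem hn_ne
  refine ⟨K, fun x hx hx_lt ↦ hQsymm.div_mem_of_abs_div_mem ?_⟩
  obtain ⟨a, k, habs⟩ := hx.exists_abs_eq_natCast_div_pow
  have ha : a < n ^ k := by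
    rw [habs, div_lt_one (by positivity)] at hx_lt
    exact_mod_cast hx_lt
  rw [habs]
  exact hK a k ha
end

section
/- Fix an integer n ≥ 2 and let H = ℤ[1/n]. Suppose Q ⊆ H is a symmetric subset confining for H under the action of α⁻¹ (where α⁻¹(x) = x/n), that Q contains every x ∈ H with |x| < 1, and that Q is unbounded in the sense that for every k ≥ 0 there exists x ∈ Q with |x| ≥ n^k. Then Q = H. -/
/-!
Dividing a very large element of `Q` by powers of `b` (here `b = n`) gives some `p ∈ [b⁻¹, 1)`
that still lies in `Q` after multiplication by a high power of `b`. Each use of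
`(Q + Q) / b ^ k₀ ⊆ Q` consumes only `k₀` of these powers, so as many multiples `m • p` as desired
lie in `Q`. Given `h ≥ 0` in `H`, put `t = h * b ^ k₀`. Euclidean division of `t` by `p` has a
remainder in `[0, 1)`, hence in `Q`, and a quotient bounded by `b * t` independently of `p`.
Thus `t` is a sum of two elements of `Q`, and `h = t / b ^ k₀ ∈ Q`. Negative `h` follow by symmetry.
-/

theorem mul_pow_mem_of_forall_mul_mem {M : Type*} [Monoid M] {S : Set M} {b x : M}
    (hmul : ∀ y ∈ S, y * b ∈ S) (hx : x ∈ S) (k : ℕ) : x * b ^ k ∈ S := by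
  induction k with
  | zero => simpa using hx
  | succ k ih => simpa only [pow_succ, mul_assoc] using hmul _ ih

theorem mul_pow_mem_of_le {G₀ : Type*} [GroupWithZero G₀] {Q : Set G₀} {b x : G₀} (hb : b ≠ 0)
    (hdiv : ∀ y ∈ Q, y / b ∈ Q) {i j : ℕ} (hij : i ≤ j) (hx : x * b ^ j ∈ Q) :
    x * b ^ i ∈ Q := by
  induction j, hij using Nat.le_induction with
  | base => exact hx
  | succ j _ ih =>
    apply ih
    simpa only [pow_succ, ← mul_assoc, mul_div_cancel_right₀ _ hb] using hdiv _ hx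

theorem nsmul_mem_of_mul_pow_mem {K : Type*} [DivisionRing K] {Q : Set K} {b p : K} {k₀ m : ℕ}
    (hb : b ≠ 0) (hdiv : ∀ x ∈ Q, x / b ∈ Q) (hadd : ∀ x ∈ Q, ∀ y ∈ Q, (x + y) / b ^ k₀ ∈ Q)
    (hzero : 0 ∈ Q) (hp : p * b ^ (m * k₀) ∈ Q) : m • p ∈ Q := by
  induction m generalizing p with
  | zero => simpa using hzero
  | succ m ih =>
    have hmul : m • (p * b ^ k₀) ∈ Q :=
      ih (by rwa [mul_assoc, ← pow_add, add_comm, ← Nat.succ_mul])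
    have hone : p * b ^ k₀ ∈ Q :=
      mul_pow_mem_of_le hb hdiv (Nat.le_mul_of_pos_left k₀ m.succ_pos) hp
    have hsum : (m • (p * b ^ k₀) + p * b ^ k₀) / b ^ k₀ = (m + 1) • p := by
      rw [← succ_nsmul, ← smul_mul_assoc, mul_div_cancel_right₀ _ (pow_ne_zero _ hb)]
    exact hsum ▸ hadd _ hmul _ hone

theorem exists_nat_sub_nsmul_mem_Ico {A : Type*} [AddCommGroup A] [LinearOrder A]
    [IsOrderedAddMonoid A] [Archimedean A] {p t : A} (hp : 0 < p) (ht : 0 ≤ t) :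
    ∃ m : ℕ, t - m • p ∈ Set.Ico 0 p := by
  obtain ⟨m, ⟨hle, hlt⟩, -⟩ := existsUnique_zsmul_near_of_pos hp t
  have hm : 0 ≤ m :=
    Int.lt_add_one_iff.mp ((zsmul_lt_zsmul_iff_left hp).mp (by simpa using ht.trans_lt hlt))
  lift m to ℕ using hm
  rw [natCast_zsmul] at hle
  rw [add_zsmul, natCast_zsmul, one_zsmul] at hlt
  exact ⟨m, sub_nonneg.mpr hle, sub_lt_iff_lt_add'.mpr hlt⟩

section OrderedField

variable {K : Type*} [Field K] [LinearOrder K] [IsStrictOrderedRing K] [Archimedean K]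
  {b : K} {G : AddSubgroup K} {Q : Set K} {k₀ : ℕ}

theorem exists_mem_Ico_mul_pow_eq (hb : 1 < b) {N : ℕ} {x : K} (hx : b ^ N ≤ x) :
    ∃ p ∈ Set.Ico b⁻¹ 1, ∃ k, N ≤ k ∧ p * b ^ k = x := by
  have hb₀ : 0 < b := zero_lt_one.trans hb
  obtain ⟨k, hle, hlt⟩ := exists_nat_pow_near ((one_le_pow₀ hb.le).trans hx) hb
  have hpow : 0 < b ^ (k + 1) := pow_pos hb₀ _
  have hNk : N < k + 1 := (pow_lt_pow_iff_right₀ hb).mp (hx.trans_lt hlt)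
  refine ⟨x / b ^ (k + 1), ⟨?_, (div_lt_one hpow).mpr hlt⟩, k + 1, hNk.le,
    div_mul_cancel₀ x hpow.ne'⟩
  rwa [le_div_iff₀ hpow, pow_succ', inv_mul_cancel_left₀ hb₀.ne']

theorem exists_mem_Ico_forall_nsmul_mem (hb : 1 < b) (hdiv : ∀ x ∈ Q, x / b ∈ Q)
    (hadd : ∀ x ∈ Q, ∀ y ∈ Q, (x + y) / b ^ k₀ ∈ Q) (hzero : 0 ∈ Q)
    (hunb : ∀ k : ℕ, ∃ x ∈ Q, b ^ k ≤ x) (M : ℕ) :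
    ∃ p ∈ Set.Ico b⁻¹ 1, ∀ m ≤ M, m • p ∈ Q := by
  have hb₀ : b ≠ 0 := (zero_lt_one.trans hb).ne'
  obtain ⟨x, hxQ, hx⟩ := hunb (M * k₀)
  obtain ⟨p, hp, k, hk, rfl⟩ := exists_mem_Ico_mul_pow_eq hb hx
  refine ⟨p, hp, fun m hm ↦ nsmul_mem_of_mul_pow_mem hb₀ hdiv hadd hzero ?_⟩
  exact mul_pow_mem_of_le hb₀ hdiv ((Nat.mul_le_mul_right k₀ hm).trans hk) hxQ

theorem mem_of_nonneg_of_unbounded (hb : 1 < b) (hG : ∀ x ∈ G, x * b ∈ G) (hQG : Q ⊆ G)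
    (hdiv : ∀ x ∈ Q, x / b ∈ Q) (hadd : ∀ x ∈ Q, ∀ y ∈ Q, (x + y) / b ^ k₀ ∈ Q)
    (hball : ∀ x ∈ G, |x| < 1 → x ∈ Q) (hunb : ∀ k : ℕ, ∃ x ∈ Q, b ^ k ≤ x)
    {h : K} (hh : h ∈ G) (hnonneg : 0 ≤ h) : h ∈ Q := by
  have hb₀ : 0 < b := zero_lt_one.trans hb
  have hzero : 0 ∈ Q := hball 0 G.zero_mem (by simp)
  set t := h * b ^ k₀ with ht
  have htG : t ∈ G := mul_pow_mem_of_forall_mul_mem hG hh k₀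
  have ht₀ : 0 ≤ t := mul_nonneg hnonneg (pow_pos hb₀ k₀).le
  obtain ⟨M, hM⟩ := Archimedean.arch t (inv_pos.mpr hb₀)
  obtain ⟨p, ⟨hbp, hp₁⟩, hpQ⟩ := exists_mem_Ico_forall_nsmul_mem hb hdiv hadd hzero hunb M
  have hp₀ : 0 < p := (inv_pos.mpr hb₀).trans_le hbp
  obtain ⟨m, hr₀, hrp⟩ := exists_nat_sub_nsmul_mem_Ico hp₀ ht₀
  have hmM : m ≤ M := by
    refine (nsmul_le_nsmul_iff_left hp₀).mp ?_
    calc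
      m • p ≤ t := sub_nonneg.mp hr₀
      _ ≤ M • b⁻¹ := hM
      _ ≤ M • p := nsmul_le_nsmul_right hbp M
  have hmQ : m • p ∈ Q := hpQ m hmM
  have hrQ : t - m • p ∈ Q :=
    hball _ (G.sub_mem htG (hQG hmQ)) ((abs_of_nonneg hr₀).trans_lt (hrp.trans hp₁))
  simpa only [add_sub_cancel, ht, mul_div_cancel_right₀ h (pow_ne_zero k₀ hb₀.ne')]
    using hadd _ hmQ _ hrQ

theorem confiningInv_unbounded_eq_general (hb : 1 < b) (hG : ∀ x ∈ G, x * b ∈ G) (hQG : Q ⊆ G)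
    (hneg : ∀ x ∈ Q, -x ∈ Q) (hdiv : ∀ x ∈ Q, x / b ∈ Q)
    (hadd : ∀ x ∈ Q, ∀ y ∈ Q, (x + y) / b ^ k₀ ∈ Q) (hball : ∀ x ∈ G, |x| < 1 → x ∈ Q)
    (hunb : ∀ k : ℕ, ∃ x ∈ Q, b ^ k ≤ |x|) : Q = G := by
  have habs {x : K} (hx : x ∈ Q) : |x| ∈ Q := abs_by_cases (· ∈ Q) hx (hneg x hx)
  have hunb_pos (k : ℕ) : ∃ x ∈ Q, b ^ k ≤ x :=
    let ⟨x, hxQ, hx⟩ := hunb k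
    ⟨|x|, habs hxQ, hx⟩
  have hmem {x : K} : x ∈ G → 0 ≤ x → x ∈ Q :=
    mem_of_nonneg_of_unbounded hb hG hQG hdiv hadd hball hunb_pos
  refine hQG.antisymm fun x hx ↦ ?_
  rcases le_total 0 x with hx₀ | hx₀
  · exact hmem hx hx₀
  · exact neg_neg x ▸ hneg _ (hmem (G.neg_mem hx) (neg_nonneg.mpr hx₀))

end OrderedField

/-- The group `H = ℤ[1/n]` as an additive subgroup of `ℚ`, with carrier the predicate `inH n`. -/
def inHAddSubgroup (n : ℕ) (hn : n ≠ 0) : AddSubgroup ℚ where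
  carrier := {x | inH n x}
  zero_mem' := ⟨0, 0, by simp⟩
  add_mem' := by
    rintro _ _ ⟨a, k, rfl⟩ ⟨c, l, rfl⟩
    have hn' : (n : ℚ) ≠ 0 := Nat.cast_ne_zero.mpr hn
    refine ⟨a * n ^ l + n ^ k * c, k + l, ?_⟩
    push_cast
    rw [div_add_div _ _ (pow_ne_zero k hn') (pow_ne_zero l hn'), pow_add]
  neg_mem' := by
    rintro _ ⟨a, k, rfl⟩
    exact ⟨-a, k, by rw [Int.cast_neg, neg_div]⟩

theorem inH_mul_natCast {n : ℕ} {x : ℚ} (hx : inH n x) : inH n (x * n) := by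
  obtain ⟨a, k, rfl⟩ := hx
  exact ⟨a * n, k, by push_cast; rw [div_mul_eq_mul_div]⟩

/-- If `Q ⊆ H = ℤ[1/n]` is a symmetric confining subset under `α⁻¹ : x ↦ x/n` which
contains `Q⁻ = {x ∈ H : |x| < 1}` and is unbounded (for every `k` it contains an
element of absolute value at least `n^k`), then `Q = H`. -/
theorem confiningInv_unbounded_eq (n : ℕ) (hn : 2 ≤ n) (Q : Set ℚ)
    (hQsymm : IsSymmSet Q) (hQconf : ConfiningInv n Q)
    (hQminus : ∀ x : ℚ, inH n x → |x| < 1 → x ∈ Q)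
    (hunb : ∀ k : ℕ, ∃ x ∈ Q, (n : ℚ) ^ k ≤ |x|) :
    Q = {x : ℚ | inH n x} := by
  obtain ⟨hQH, hdiv, -, k₀, hadd⟩ := hQconf
  exact confiningInv_unbounded_eq_general (G := inHAddSubgroup n (by lia))
    (Nat.one_lt_cast.mpr hn) (fun _ ↦ inH_mul_natCast) hQH hQsymm hdiv hadd hQminus hunb
end

section
/- Fix an integer n ≥ 2 with prime factorization n = p_1^{n_1}···p_k^{n_k}, and let H = ℤ[1/n]. Let A, B ⊆ {1,…,k} be subsets with A ⊄ B and B ⊄ A, and let I_A, I_B be the corresponding full ideals of ℤ_n. Then for every K ≥ 0 there exists x ∈ S(I_A) with n^K·x ∉ S(I_B), and there exists y ∈ S(I_B) with n^K·y ∉ S(I_A). -/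
/-!
Write `n_A = ∏ i ∈ A, p_i ^ n_i`, so that `n = n_A * n_Aᶜ` with coprime factors. Then
`S(I_A) = ℤ[1/n_Aᶜ]`: if `b ∈ I_A`, the divisor `n_A ^ s` of `v_s(b)` cancels against the
denominator `n ^ s`, and conversely the Chinese remainder theorem lifts every multiple of
`n_A ^ s` modulo `n ^ s` to an element of `I_A`. If `j ∈ B \ A`, then `x = 1 / n_Aᶜ ^ (K + 1)`
lies in `S(I_A)`, while `n ^ K * x = n_A ^ K / n_Aᶜ` has `p_j` in its denominator and so is not
in `S(I_B)`.
-/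

section InH

variable {n : ℕ} {x : ℚ}

lemma inH_neg : inH n (-x) ↔ inH n x := by
  have neg {y : ℚ} : inH n y → inH n (-y) := by
    rintro ⟨m, s, rfl⟩
    exact ⟨-m, s, by rw [Int.cast_neg, neg_div]⟩
  exact ⟨fun h => neg_neg x ▸ neg h, neg⟩

lemma inH_abs : inH n |x| ↔ inH n x := by
  rcases abs_choice x with h | h <;> rw [h]
  exact inH_neg

lemma inH_of_inH_fract (hn : n ≠ 0) (h : inH n (Int.fract x)) : inH n x := by
  obtain ⟨m, s, hm⟩ := h
  refine ⟨⌊x⌋ * n ^ s + m, s, ?_⟩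
  calc x = ⌊x⌋ + m / (n : ℚ) ^ s := by rw [← hm, Int.floor_add_fract]
    _ = (⌊x⌋ * n ^ s + m : ℤ) / (n : ℚ) ^ s := by push_cast; field_simp

lemma not_inH_div {q d u c : ℕ} (hq : q.Prime) (hqc : q ∣ c) (hqu : ¬ q ∣ u) (hqd : ¬ q ∣ d)
    (hc : c ≠ 0) : ¬ inH d (u / c) := by
  rintro ⟨m, s, hm⟩
  have hd : d ≠ 0 := fun h => hqd (h ▸ dvd_zero q)
  have cross : (u * d ^ s : ℤ) = c * m := by
    field_simp at hm
    exact_mod_cast hm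
  have hdvd : q ∣ u * d ^ s := by
    exact_mod_cast (Int.natCast_dvd_natCast.2 hqc).trans (Dvd.intro m cross.symm)
  rcases hq.dvd_mul.1 hdvd with h | h
  · exact hqu h
  · exact hqd (hq.dvd_of_dvd_pow h)

end InH

section PowDivisible

/-- The elements of `ℤ_n` whose `l`-th coordinate is divisible by `a ^ l` for every `l`. The full
ideal `I_A` is the case `a = ∏ i ∈ A, p_i ^ n_i`; the vacuous condition at `l = 0` is included. -/
def powDivisible (n a : ℕ) : Set (∀ l : ℕ, ZMod (n ^ l)) :=
  {x | ZnMem n x ∧ ∀ l, a ^ l ∣ (x l).val}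

lemma znMem_natCast {n : ℕ} {u : ℕ → ℕ} (hu : ∀ r l, r ≤ l → u l ≡ u r [MOD n ^ r]) :
    ZnMem n (fun l => (u l : ZMod (n ^ l))) := by
  intro r l h
  rw [map_natCast]
  exact (ZMod.natCast_eq_natCast_iff _ _ _).2 (hu r l h)

variable {a c : ℕ}

lemma exists_mem_powDivisible_apply_eq (hac : a.Coprime c) {s N : ℕ} (hN : a ^ s ∣ N) :
    ∃ b ∈ powDivisible (a * c) a, b s = N := by
  let u (l : ℕ) : ℕ := Nat.chineseRemainder (hac.pow l l) 0 N
  have hua (l : ℕ) : u l ≡ 0 [MOD a ^ l] := (Nat.chineseRemainder (hac.pow l l) 0 N).2.1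
  have huc (l : ℕ) : u l ≡ N [MOD c ^ l] := (Nat.chineseRemainder (hac.pow l l) 0 N).2.2
  have modEq_of {r v w : ℕ} (ha : v ≡ w [MOD a ^ r]) (hc : v ≡ w [MOD c ^ r]) :
      v ≡ w [MOD (a * c) ^ r] := by
    rw [mul_pow]
    exact (Nat.modEq_and_modEq_iff_modEq_mul (hac.pow r r)).1 ⟨ha, hc⟩
  refine ⟨fun l => (u l : ZMod ((a * c) ^ l)), ⟨znMem_natCast fun r l h => ?_, fun l => ?_⟩, ?_⟩
  · exact modEq_of (((hua l).of_dvd (pow_dvd_pow a h)).trans (hua r).symm)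
      (((huc l).of_dvd (pow_dvd_pow c h)).trans (huc r).symm)
  · rw [ZMod.val_natCast, Nat.dvd_mod_iff (pow_dvd_pow_of_dvd (dvd_mul_right a c) l)]
    exact Nat.modEq_zero_iff_dvd.1 (hua l)
  · exact (ZMod.natCast_eq_natCast_iff _ _ _).2
      (modEq_of ((hua s).trans (Nat.modEq_zero_iff_dvd.2 hN).symm) (huc s))

lemma inH_of_mem_SIdeal_powDivisible (ha : a ≠ 0) (hc : c ≠ 0) {x : ℚ}
    (hx : x ∈ SIdeal (a * c) (powDivisible (a * c) a)) : inH c x := by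
  obtain ⟨-, s, -, b, hb, hfract⟩ := hx
  obtain ⟨w, hw⟩ := hb.2 s
  refine inH_abs.1 (inH_of_inH_fract hc ⟨w, s, ?_⟩)
  rw [hfract, hw]
  push_cast
  rw [mul_pow, mul_div_mul_left _ _ (by positivity)]

lemma mem_SIdeal_powDivisible_of_inH (ha : a ≠ 0) (hc : c ≠ 0) (hac : a.Coprime c)
    {x : ℚ} (hx : inH c x) : x ∈ SIdeal (a * c) (powDivisible (a * c) a) := by
  obtain ⟨m, s, rfl⟩ := hx
  have expand (y : ℚ) : y / c ^ s = a ^ s * y / ((a * c : ℕ) : ℚ) ^ s := by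
    rw [Nat.cast_mul, mul_pow, mul_div_mul_left _ _ (by positivity)]
  have habs : |(m : ℚ) / c ^ s| = (a ^ s * m.natAbs : ℕ) / (((a * c) ^ s : ℕ) : ℚ) := by
    rw [abs_div, abs_of_nonneg (by positivity : (0 : ℚ) ≤ c ^ s), expand]
    push_cast [Nat.cast_natAbs]
    rfl
  obtain ⟨b, hb, hbs⟩ := exists_mem_powDivisible_apply_eq hac (dvd_mul_right (a ^ s) m.natAbs)
  refine ⟨⟨a ^ s * m, s, ?_⟩, s, ⟨a ^ s * m, ?_⟩, b, hb, ?_⟩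
  · rw [expand]
    push_cast
    rfl
  · rw [expand, mul_div_cancel₀ _ (by positivity)]
    push_cast
    rfl
  · rw [habs, Int.fract_div_natCast_eq_div_natCast_mod, hbs, ZMod.val_natCast, Nat.cast_pow]

theorem SIdeal_powDivisible_eq (ha : a ≠ 0) (hc : c ≠ 0) (hac : a.Coprime c) :
    SIdeal (a * c) (powDivisible (a * c) a) = {x | inH c x} :=
  Set.ext fun _ => ⟨inH_of_mem_SIdeal_powDivisible ha hc, mem_SIdeal_powDivisible_of_inH ha hc hac⟩

end PowDivisible

section PrimePart

variable {ι : Type*} [Fintype ι] {p e : ι → ℕ} {A B : Set ι}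

open Classical in
/-- The factor `∏ i ∈ A, p_i ^ e_i` of `n = ∏ i, p_i ^ e_i` cut out by a set `A` of indices. -/
noncomputable def primePart (p e : ι → ℕ) (A : Set ι) : ℕ := ∏ i with i ∈ A, p i ^ e i

lemma primePart_mul_primePart_compl (p e : ι → ℕ) (A : Set ι) :
    primePart p e A * primePart p e Aᶜ = ∏ i, p i ^ e i := by
  classical
  simp only [primePart, Set.mem_compl_iff]
  convert Finset.prod_filter_mul_prod_filter_not Finset.univ (· ∈ A) fun i => p i ^ e i

lemma primePart_ne_zero (hp : ∀ i, (p i).Prime) (A : Set ι) : primePart p e A ≠ 0 :=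
  Finset.prod_ne_zero_iff.2 fun i _ => pow_ne_zero _ (hp i).ne_zero

lemma pow_dvd_primePart {i : ι} (hi : i ∈ A) : p i ^ e i ∣ primePart p e A :=
  Finset.dvd_prod_of_mem (fun i => p i ^ e i) (by simpa using hi)

lemma dvd_primePart {i : ι} (he : e i ≠ 0) (hi : i ∈ A) : p i ∣ primePart p e A :=
  (dvd_pow_self _ he).trans (pow_dvd_primePart hi)

lemma not_dvd_primePart (hp : ∀ i, (p i).Prime) (hinj : Function.Injective p) {i : ι}
    (hi : i ∉ A) : ¬ p i ∣ primePart p e A := by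
  refine (hp i).coprime_iff_not_dvd.1 (Nat.Coprime.prod_right fun j hj => ?_)
  have hij : i ≠ j := fun h => hi (by simpa [h] using hj)
  exact ((Nat.coprime_primes (hp i) (hp j)).2 (hinj.ne hij)).pow_right _

lemma coprime_primePart (hp : ∀ i, (p i).Prime) (hinj : Function.Injective p)
    (hAB : Disjoint A B) : (primePart p e A).Coprime (primePart p e B) := by
  refine Nat.Coprime.prod_left fun i hi => Nat.Coprime.prod_right fun j hj => ?_
  simp only [Finset.mem_filter_univ] at hi hj
  exact Nat.coprime_pow_primes _ _ (hp i) (hp j) (hinj.ne (hAB.ne_of_mem hi hj))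

lemma primePart_pow_dvd_iff (hp : ∀ i, (p i).Prime) (hinj : Function.Injective p) {l v : ℕ} :
    primePart p e A ^ l ∣ v ↔ ∀ i ∈ A, p i ^ (e i * l) ∣ v := by
  refine ⟨fun h i hi => ?_, fun h => ?_⟩
  · rw [pow_mul]
    exact (pow_dvd_pow_of_dvd (pow_dvd_primePart hi) l).trans h
  · simp only [primePart, ← Finset.prod_pow, ← pow_mul]
    refine Finset.prod_dvd_of_isRelPrime (fun i _ j _ hij => ?_) fun i hi => h i (by simpa using hi)
    exact Nat.coprime_iff_isRelPrime.1 (Nat.coprime_pow_primes _ _ (hp i) (hp j) (hinj.ne hij))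

end PrimePart

section FullIdeal

variable {n k : ℕ} {p e : Fin k → ℕ} {A B : Set (Fin k)}

lemma fullIdeal_eq_powDivisible (hp : ∀ i, (p i).Prime) (hinj : Function.Injective p) :
    FullIdeal n p e A = powDivisible n (primePart p e A) := by
  ext x
  simp only [FullIdeal, powDivisible, primePart_pow_dvd_iff hp hinj, Set.mem_ofPred_eq]
  refine and_congr_right fun _ => ⟨fun h l i hi => ?_, fun h i hi l _ => h l i hi⟩
  rcases Nat.eq_zero_or_pos l with rfl | hl
  · simp
  · exact h i hi l hl

theorem SIdeal_fullIdeal_eq (hp : ∀ i, (p i).Prime) (hinj : Function.Injective p)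
    (hfact : n = ∏ i, p i ^ e i) :
    SIdeal n (FullIdeal n p e A) = {x | inH (primePart p e Aᶜ) x} := by
  rw [fullIdeal_eq_powDivisible hp hinj, hfact, ← primePart_mul_primePart_compl p e A]
  exact SIdeal_powDivisible_eq (primePart_ne_zero hp A) (primePart_ne_zero hp Aᶜ)
    (coprime_primePart hp hinj disjoint_compl_right)

theorem exists_mem_SIdeal_pow_mul_notMem (hp : ∀ i, (p i).Prime) (he : ∀ i, 1 ≤ e i)
    (hinj : Function.Injective p) (hfact : n = ∏ i, p i ^ e i) (hBA : ¬B ⊆ A) (K : ℕ) :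
    ∃ x ∈ SIdeal n (FullIdeal n p e A), (n : ℚ) ^ K * x ∉ SIdeal n (FullIdeal n p e B) := by
  obtain ⟨j, hjB, hjA⟩ := Set.not_subset.1 hBA
  simp only [SIdeal_fullIdeal_eq hp hinj hfact, Set.mem_ofPred_eq]
  have hc : primePart p e Aᶜ ≠ 0 := primePart_ne_zero hp Aᶜ
  refine ⟨1 / (primePart p e Aᶜ : ℚ) ^ (K + 1), ⟨1, K + 1, by rw [Int.cast_one]⟩, ?_⟩
  have hx : (n : ℚ) ^ K * (1 / (primePart p e Aᶜ : ℚ) ^ (K + 1)) =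
      (primePart p e A ^ K : ℕ) / primePart p e Aᶜ := by
    rw [hfact, ← primePart_mul_primePart_compl p e A]
    push_cast
    rw [mul_pow, pow_succ]
    field_simp
  have hA : ¬ p j ∣ primePart p e A ^ K :=
    fun h => not_dvd_primePart hp hinj hjA ((hp j).dvd_of_dvd_pow h)
  rw [hx]
  exact not_inH_div (hp j) (dvd_primePart (Nat.one_le_iff_ne_zero.1 (he j)) hjA) hA
    (not_dvd_primePart hp hinj (Set.notMem_compl_iff.2 hjB)) hc

end FullIdeal

/-- Let `n = p_1^{n_1}⋯p_k^{n_k}` be the prime factorization of `n ≥ 2` and let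
`A, B ⊆ {1,…,k}` with `A ⊄ B` and `B ⊄ A`. Then for every `K ≥ 0` there is
`x ∈ S(I_A)` with `n^K·x ∉ S(I_B)`, and there is `y ∈ S(I_B)` with `n^K·y ∉ S(I_A)`. -/
theorem SIdeal_full_incomparable (n : ℕ) (hn : 2 ≤ n) (k : ℕ) (p e : Fin k → ℕ)
    (hp : ∀ i, (p i).Prime) (he : ∀ i, 1 ≤ e i) (hinj : Function.Injective p)
    (hfact : n = ∏ i, p i ^ e i) (A B : Set (Fin k)) (hAB : ¬A ⊆ B) (hBA : ¬B ⊆ A) :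
    ∀ K : ℕ,
      (∃ x ∈ SIdeal n (FullIdeal n p e A), (n : ℚ) ^ K * x ∉ SIdeal n (FullIdeal n p e B)) ∧
      (∃ y ∈ SIdeal n (FullIdeal n p e B), (n : ℚ) ^ K * y ∉ SIdeal n (FullIdeal n p e A)) :=
  fun K => ⟨exists_mem_SIdeal_pow_mul_notMem hp he hinj hfact hBA K,
    exists_mem_SIdeal_pow_mul_notMem hp he hinj hfact hAB K⟩
end

section
/- Fix an integer n ≥ 2 with prime factorization n = p_1^{n_1}···p_k^{n_k}, and let H = ℤ[1/n]. First, for any ideals 𝔞 ⊆ 𝔟 of ℤ_n one has S(𝔞) ⊆ S(𝔟). Moreover, if A, B ⊆ {1,…,k} satisfy B ⊊ A (so that the full ideals satisfy I_A ⊊ I_B), then S(I_A) ⊆ S(I_B) and for every K ≥ 0 there exists x ∈ S(I_B) with n^K·x ∉ S(I_A). -/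
/-!
Let `m = p_i^{e_i}` with `i ∈ A \ B`, and let `n = q * m`, so `q` and `m` are coprime. Elements of
`S(I_A)` have no `m`-part in their denominators: they become integers after multiplication by a
power of `q`. On the other hand `I_B` contains the idempotent `b` of `ℤ_n` that is `0` modulo powers
of `q` and `1` modulo powers of `m`. Hence `x = v_{K+1}(b) / n^{K+1}` lies in `S(I_B)`, whereas
`n^K x = v_{K+1}(b) / n` keeps the whole factor `m` in its denominator.
-/

theorem SIdeal_mono {n : ℕ} {I J : Set (∀ l : ℕ, ZMod (n ^ l))} (hIJ : I ⊆ J) :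
    SIdeal n I ⊆ SIdeal n J :=
  fun _ ⟨hx, s, hs, b, hb, hfract⟩ => ⟨hx, s, hs, b, hIJ hb, hfract⟩

theorem val_div_pow_mem_SIdeal {n : ℕ} (hn : n ≠ 0) {I : Set (∀ l : ℕ, ZMod (n ^ l))}
    {b : ∀ l : ℕ, ZMod (n ^ l)} (hb : b ∈ I) (s : ℕ) :
    ((b s).val : ℚ) / (n : ℚ) ^ s ∈ SIdeal n I := by
  have : NeZero (n ^ s) := ⟨pow_ne_zero s hn⟩
  have hlt : ((b s).val : ℚ) < (n : ℚ) ^ s := mod_cast ZMod.val_lt (b s)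
  refine ⟨⟨(b s).val, s, by rw [Int.cast_natCast]⟩, s, ⟨(b s).val, ?_⟩, b, hb, ?_⟩
  · rw [mul_div_cancel₀ _ (by positivity), Int.cast_natCast]
  · rw [abs_of_nonneg (by positivity), Int.fract_eq_self]
    exact ⟨by positivity, (div_lt_one (by positivity)).2 hlt⟩

section CoprimeFactorization

variable {n q m : ℕ}

theorem exists_znMem_val_modEq (hnqm : n = q * m) (hqm : q.Coprime m) (a c : ℕ) :
    ∃ x : ∀ l : ℕ, ZMod (n ^ l), ZnMem n x ∧
      ∀ l, (x l).val ≡ a [MOD q ^ l] ∧ (x l).val ≡ c [MOD m ^ l] := by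
  have crt (l : ℕ) : ∃ r : ℕ, r ≡ a [MOD q ^ l] ∧ r ≡ c [MOD m ^ l] :=
    ⟨_, (Nat.chineseRemainder (hqm.pow l l) a c).2⟩
  choose r hra hrc using crt
  refine ⟨fun l => r l, fun j l hjl => ?_, fun l => ?_⟩
  · rw [map_natCast, ZMod.natCast_eq_natCast_iff, hnqm, mul_pow,
      ← Nat.modEq_and_modEq_iff_modEq_mul (hqm.pow j j)]
    exact ⟨((hra l).of_dvd (pow_dvd_pow q hjl)).trans (hra j).symm,
      ((hrc l).of_dvd (pow_dvd_pow m hjl)).trans (hrc j).symm⟩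
  · have hval : (r l : ZMod (n ^ l)).val ≡ r l [MOD q ^ l * m ^ l] := by
      rw [ZMod.val_natCast, ← mul_pow, ← hnqm]
      exact Nat.mod_modEq _ _
    exact ⟨hval.of_mul_right.trans (hra l), hval.of_mul_left.trans (hrc l)⟩

variable {I : Set (∀ l : ℕ, ZMod (n ^ l))}

theorem exists_pow_mul_eq_intCast_of_mem_SIdeal (hn : n ≠ 0) (hnqm : n = q * m)
    (hI : ∀ b ∈ I, ∀ l, m ^ l ∣ (b l).val) {x : ℚ} (hx : x ∈ SIdeal n I) :
    ∃ (t : ℕ) (z : ℤ), (q : ℚ) ^ t * x = z := by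
  obtain ⟨-, t, -, b, hb, hfract⟩ := hx
  obtain ⟨c, hc⟩ := hI b hb t
  have hq : (q : ℚ) ≠ 0 := mod_cast left_ne_zero_of_mul (hnqm ▸ hn)
  have hm : (m : ℚ) ≠ 0 := mod_cast right_ne_zero_of_mul (hnqm ▸ hn)
  have hfract_mul : (q : ℚ) ^ t * Int.fract |x| = c := by
    rw [hfract, hc, hnqm]
    push_cast
    rw [mul_pow]
    field_simp
  have habs : (q : ℚ) ^ t * |x| = ((q ^ t * ⌊|x|⌋ + c : ℤ) : ℚ) := by
    push_cast
    rw [← hfract_mul, ← mul_add, Int.floor_add_fract]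
  rcases abs_choice x with h | h
  · exact ⟨t, _, h ▸ habs⟩
  · refine ⟨t, -(q ^ t * ⌊|x|⌋ + c), ?_⟩
    rw [Int.cast_neg, ← habs, h, mul_neg, neg_neg]

theorem natCast_div_notMem_SIdeal (hn : n ≠ 0) (hnqm : n = q * m) (hqm : q.Coprime m)
    (hm : m ≠ 1) (hI : ∀ b ∈ I, ∀ l, m ^ l ∣ (b l).val) {v : ℕ} (hv : v.Coprime m) :
    (v : ℚ) / n ∉ SIdeal n I := by
  intro hmem
  obtain ⟨t, z, hz⟩ := exists_pow_mul_eq_intCast_of_mem_SIdeal hn hnqm hI hmem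
  have hmul : (q : ℤ) ^ t * v = n * z := by
    rw [← mul_div_assoc, div_eq_iff (mod_cast hn), mul_comm (z : ℚ)] at hz
    exact_mod_cast hz
  have hn_dvd : n ∣ q ^ t * v := Int.natCast_dvd_natCast.1 ⟨z, by exact_mod_cast hmul⟩
  have hm_dvd : m ∣ q ^ t * v := (Dvd.intro_left q hnqm.symm).trans hn_dvd
  exact hm (((hqm.pow_left t).mul_left hv).symm.eq_one_of_dvd hm_dvd)

end CoprimeFactorization

theorem exists_coprime_cofactor_of_pairwise_coprime {ι : Type*} [Fintype ι] {f : ι → ℕ}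
    (hf : Pairwise (Function.onFun Nat.Coprime f)) (i : ι) :
    ∃ q, ∏ j, f j = q * f i ∧ q.Coprime (f i) ∧ ∀ j ≠ i, f j ∣ q := by
  classical
  refine ⟨∏ j ∈ Finset.univ.erase i, f j, ?_, ?_, fun j hj => ?_⟩
  · rw [Finset.prod_erase_mul _ _ (Finset.mem_univ i)]
  · exact Nat.Coprime.prod_left fun j hj => hf (Finset.ne_of_mem_erase hj)
  · exact Finset.dvd_prod_of_mem f (Finset.mem_erase.2 ⟨hj, Finset.mem_univ j⟩)

namespace FullIdeal

variable {n k : ℕ} {p e : Fin k → ℕ} {A B : Set (Fin k)} {i : Fin k}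

theorem anti (hBA : B ⊆ A) : FullIdeal n p e A ⊆ FullIdeal n p e B :=
  fun _ hx => ⟨hx.1, fun i hi => hx.2 i (hBA hi)⟩

theorem pow_dvd_val {x : ∀ l : ℕ, ZMod (n ^ l)} (hx : x ∈ FullIdeal n p e A) (hi : i ∈ A)
    (l : ℕ) : (p i ^ e i) ^ l ∣ (x l).val := by
  rcases Nat.eq_zero_or_pos l with rfl | hl
  · simp
  · simpa only [pow_mul] using hx.2 i hi l hl

variable (hcop : Pairwise (Function.onFun Nat.Coprime fun i => p i ^ e i))
  (hfact : n = ∏ i, p i ^ e i)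

include hcop hfact

theorem exists_mem_forall_coprime_val (hi : i ∉ B) :
    ∃ x ∈ FullIdeal n p e B, ∀ l ≠ 0, (x l).val.Coprime (p i ^ e i) := by
  obtain ⟨q, hprod, hq, hdvd⟩ := exists_coprime_cofactor_of_pairwise_coprime hcop i
  obtain ⟨x, hx, hmod⟩ := exists_znMem_val_modEq (hfact.trans hprod) hq 0 1
  refine ⟨x, ⟨hx, fun j hj l _ => ?_⟩, fun l hl => ?_⟩
  · have hji : j ≠ i := ne_of_mem_of_not_mem hj hi
    rw [pow_mul]
    exact (pow_dvd_pow_of_dvd (hdvd j hji) l).trans (Nat.modEq_zero_iff_dvd.1 (hmod l).1)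
  · have hmod_one : (x l).val ≡ 1 [MOD p i ^ e i] := (hmod l).2.of_dvd (dvd_pow_self _ hl)
    exact hmod_one.gcd_eq.trans (Nat.gcd_one_left _)

variable (hone_lt : ∀ i, 1 < p i ^ e i)

include hone_lt

theorem subset_iff : FullIdeal n p e A ⊆ FullIdeal n p e B ↔ B ⊆ A := by
  refine ⟨fun hsub i hiB => ?_, anti⟩
  by_contra hiA
  obtain ⟨x, hxA, hcoprime⟩ := exists_mem_forall_coprime_val hcop hfact hiA
  have hdvd : p i ^ e i ∣ (x 1).val := by simpa only [pow_one] using pow_dvd_val (hsub hxA) hiB 1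
  exact (hone_lt i).ne' ((hcoprime 1 one_ne_zero).symm.eq_one_of_dvd hdvd)

theorem exists_mem_SIdeal_pow_mul_notMem_SIdeal (hAB : ¬ A ⊆ B) (K : ℕ) :
    ∃ x ∈ SIdeal n (FullIdeal n p e B), (n : ℚ) ^ K * x ∉ SIdeal n (FullIdeal n p e A) := by
  obtain ⟨i, hiA, hiB⟩ := Set.not_subset.1 hAB
  obtain ⟨q, hprod, hq, -⟩ := exists_coprime_cofactor_of_pairwise_coprime hcop i
  obtain ⟨b, hb, hcoprime⟩ := exists_mem_forall_coprime_val hcop hfact hiB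
  have hn : n ≠ 0 := hfact ▸ Finset.prod_ne_zero_iff.2 fun j _ => (hone_lt j).ne_bot
  refine ⟨_, val_div_pow_mem_SIdeal hn hb (K + 1), ?_⟩
  have hscale (v : ℚ) : (n : ℚ) ^ K * (v / (n : ℚ) ^ (K + 1)) = v / n := by
    rw [pow_succ, ← mul_div_assoc, mul_div_mul_left _ _ (by positivity)]
  rw [hscale]
  exact natCast_div_notMem_SIdeal hn (hfact.trans hprod) hq (hone_lt i).ne'
    (fun x hx => pow_dvd_val hx hiA) (hcoprime (K + 1) K.succ_ne_zero)

end FullIdeal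

theorem SIdeal_orderReversing_general {n k : ℕ} {p e : Fin k → ℕ}
    (hone_lt : ∀ i, 1 < p i ^ e i) (hcop : Pairwise (Function.onFun Nat.Coprime fun i => p i ^ e i))
    (hfact : n = ∏ i, p i ^ e i) :
    (∀ I J : Set (∀ l : ℕ, ZMod (n ^ l)), I ⊆ J → SIdeal n I ⊆ SIdeal n J) ∧
    (∀ A B, FullIdeal n p e A ⊆ FullIdeal n p e B ↔ B ⊆ A) ∧
    (∀ A B, ¬ A ⊆ B → ∀ K : ℕ, ∃ x ∈ SIdeal n (FullIdeal n p e B),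
      (n : ℚ) ^ K * x ∉ SIdeal n (FullIdeal n p e A)) :=
  ⟨fun _ _ => SIdeal_mono, fun _ _ => FullIdeal.subset_iff hcop hfact hone_lt,
    fun _ _ => FullIdeal.exists_mem_SIdeal_pow_mul_notMem_SIdeal hcop hfact hone_lt⟩

/-- Monotonicity and strict order-reversal for the map `𝔞 ↦ S(𝔞)`.
For ideals `𝔞 ⊆ 𝔟` of `ℤ_n` one has `S(𝔞) ⊆ S(𝔟)`; moreover if `B ⊊ A` (so that the
full ideals satisfy `I_A ⊊ I_B`), then `S(I_A) ⊆ S(I_B)`, and for every `K ≥ 0` there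
is `x ∈ S(I_B)` with `n^K·x ∉ S(I_A)`. -/
theorem SIdeal_orderReversing (n : ℕ) (hn : 2 ≤ n) (k : ℕ) (p e : Fin k → ℕ)
    (hp : ∀ i, (p i).Prime) (he : ∀ i, 1 ≤ e i) (hinj : Function.Injective p)
    (hfact : n = ∏ i, p i ^ e i) (A B : Set (Fin k)) (hBA : B ⊂ A) :
    (∀ I J : Set (∀ l : ℕ, ZMod (n ^ l)), IsZnIdeal n I → IsZnIdeal n J → I ⊆ J →
      SIdeal n I ⊆ SIdeal n J) ∧
    FullIdeal n p e A ⊂ FullIdeal n p e B ∧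
    SIdeal n (FullIdeal n p e A) ⊆ SIdeal n (FullIdeal n p e B) ∧
    (∀ K : ℕ, ∃ x ∈ SIdeal n (FullIdeal n p e B),
      (n : ℚ) ^ K * x ∉ SIdeal n (FullIdeal n p e A)) := by
  obtain ⟨mono, subset_iff, separation⟩ := SIdeal_orderReversing_general
    (fun i => Nat.one_lt_pow (Nat.one_le_iff_ne_zero.1 (he i)) (hp i).one_lt)
    (fun i j hij => Nat.Coprime.pow _ _ ((Nat.coprime_primes (hp i) (hp j)).2 (hinj.ne hij))) hfact
  have hsub := (subset_iff A B).2 hBA.1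
  exact ⟨fun I J _ _ => mono I J, ⟨hsub, mt (subset_iff B A).1 hBA.2⟩, mono _ _ hsub,
    separation A B hBA.2⟩
end

section
/- Let H = ℤ[x, x⁻¹] be the additive group of Laurent polynomials over ℤ, let α be the automorphism p(x) ↦ x·p(x), and let S = {±x^m : m ≥ 0}. For an integer i ≥ 1 define Q^i_0 = S, Q^i_{r+1} = Q^i_r ∪ x^i·(Q^i_r + Q^i_r) for r ≥ 0, and Q^i = ⋃_{r≥0} Q^i_r. Then for all integers 1 ≤ i < j and for every L ≥ 0, there exists r ≥ 0 such that for all integers k ≥ 0 and m ≥ 0 with 2k + m ≤ L, the Laurent polynomial 2^r·x^{ri+k} cannot be written as a sum of m elements of Q^j. -/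
open LaurentPolynomial

/-- `S = {±x^m : m ≥ 0}` inside the additive group of Laurent polynomials `ℤ[x,x⁻¹]`. -/
def SLaurent : Set (LaurentPolynomial ℤ) :=
  {p | ∃ m : ℕ, p = T (m : ℤ) ∨ p = -T (m : ℤ)}

/-- The increasing sequence of subsets `Q^i_0 = S`,
`Q^i_{r+1} = Q^i_r ∪ x^i·(Q^i_r + Q^i_r)` of `ℤ[x,x⁻¹]`. -/
def QLSeq (i : ℕ) : ℕ → Set (LaurentPolynomial ℤ)
  | 0 => SLaurent
  | r + 1 => QLSeq i r ∪
      {p | ∃ q ∈ QLSeq i r, ∃ q' ∈ QLSeq i r, p = T (i : ℤ) * (q + q')}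

/-- `Q^i = ⋃_{r ≥ 0} Q^i_r`. -/
def QLSet (i : ℕ) : Set (LaurentPolynomial ℤ) := ⋃ r : ℕ, QLSeq i r

/-!
Fix `t ≥ 1` with `t ^ j ≥ 2`. The bound `|coeff_n p| ≤ t ^ n`, for all `n ∈ ℤ`, holds on `S` and
is preserved by `(q, q') ↦ x ^ j (q + q')`, as `2 t ^ (n - j) ≤ t ^ n`; hence it holds on `Q^j`.
For `t ^ j = 2`, a representation of `2 ^ r x ^ (r i + k)` as a sum of `m` elements of `Q^j`
therefore forces `t ^ (r j) ≤ m t ^ (r i + k)`, which fails for large `r` when `i < j` and `k`, `m`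
are bounded.
-/

theorem QLSet_subset {i : ℕ} {B : Set (LaurentPolynomial ℤ)} (hS : SLaurent ⊆ B)
    (hB : ∀ q ∈ B, ∀ q' ∈ B, T (i : ℤ) * (q + q') ∈ B) : QLSet i ⊆ B := by
  refine Set.iUnion_subset fun r => ?_
  induction r with
  | zero => exact hS
  | succ r ih =>
    rintro p (hp | ⟨q, hq, q', hq', rfl⟩)
    · exact ih hp
    · exact hB q (ih hq) q' (ih hq')

theorem coeff_T_mul {R : Type*} [Semiring R] (a n : ℤ) (p : LaurentPolynomial R) :
    (T a * p).coeff n = p.coeff (n - a) := by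
  rw [T, AddMonoidAlgebra.coeff_single_mul_apply, one_mul, neg_add_eq_sub]

section CoefficientBound

variable {K : Type*} [Field K] [LinearOrder K] [IsStrictOrderedRing K] {t : K}

theorem abs_coeff_T_le_zpow (ht : 1 ≤ t) (m : ℕ) (n : ℤ) :
    |((T (m : ℤ) : LaurentPolynomial ℤ).coeff n : K)| ≤ t ^ n := by
  rw [T_apply]
  split_ifs with h
  · subst h
    simpa using one_le_pow₀ ht
  · simpa using zpow_nonneg (zero_le_one.trans ht) n

theorem abs_coeff_le_zpow_of_mem_SLaurent (ht : 1 ≤ t) {p : LaurentPolynomial ℤ}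
    (hp : p ∈ SLaurent) (n : ℤ) : |(p.coeff n : K)| ≤ t ^ n := by
  obtain ⟨m, rfl | rfl⟩ := hp
  · exact abs_coeff_T_le_zpow ht m n
  · simpa only [AddMonoidAlgebra.coeff_neg, Finsupp.neg_apply, Int.cast_neg, abs_neg] using
      abs_coeff_T_le_zpow ht m n

theorem abs_coeff_T_mul_add_le_zpow {j : ℕ} (ht : 0 < t) (htj : 2 ≤ t ^ j)
    {q q' : LaurentPolynomial ℤ} (hq : ∀ n, |(q.coeff n : K)| ≤ t ^ n)
    (hq' : ∀ n, |(q'.coeff n : K)| ≤ t ^ n) (n : ℤ) :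
    |((T (j : ℤ) * (q + q')).coeff n : K)| ≤ t ^ n := by
  rw [coeff_T_mul, AddMonoidAlgebra.coeff_add, Finsupp.add_apply, Int.cast_add]
  calc |(q.coeff (n - j) : K) + q'.coeff (n - j)|
      ≤ |(q.coeff (n - j) : K)| + |(q'.coeff (n - j) : K)| := abs_add_le _ _
    _ ≤ t ^ (n - j) + t ^ (n - j) := add_le_add (hq _) (hq' _)
    _ = 2 * t ^ (n - j) := (two_mul _).symm
    _ ≤ t ^ j * t ^ (n - j) := by gcongr
    _ = t ^ n := by rw [← zpow_natCast, ← zpow_add₀ ht.ne', add_sub_cancel]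

theorem abs_coeff_le_zpow_of_mem_QLSet {j : ℕ} (ht : 1 ≤ t) (htj : 2 ≤ t ^ j)
    {p : LaurentPolynomial ℤ} (hp : p ∈ QLSet j) : ∀ n : ℤ, |(p.coeff n : K)| ≤ t ^ n :=
  QLSet_subset (B := {p | ∀ n : ℤ, |(p.coeff n : K)| ≤ t ^ n})
    (fun _ => abs_coeff_le_zpow_of_mem_SLaurent ht)
    (fun _ hq _ hq' => abs_coeff_T_mul_add_le_zpow (zero_lt_one.trans_le ht) htj hq hq') hp

theorem abs_coeff_sum_le_card_mul_zpow {ι : Type*} {j : ℕ} (ht : 1 ≤ t) (htj : 2 ≤ t ^ j)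
    {s : Finset ι} {f : ι → LaurentPolynomial ℤ} (hf : ∀ a ∈ s, f a ∈ QLSet j) (n : ℤ) :
    |((∑ a ∈ s, f a).coeff n : K)| ≤ s.card * t ^ n := by
  rw [AddMonoidAlgebra.coeff_sum, Finsupp.finsetSum_apply, Int.cast_sum, ← nsmul_eq_mul]
  exact (Finset.abs_sum_le_sum_abs _ _).trans
    (Finset.sum_le_card_nsmul _ _ _ fun a ha => abs_coeff_le_zpow_of_mem_QLSet ht htj (hf a ha) n)

end CoefficientBound

theorem exists_forall_mul_pow_lt_pow {R : Type*} [CommRing R] [LinearOrder R]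
    [IsStrictOrderedRing R] [Archimedean R] {t : R} (ht : 1 < t) {i j : ℕ} (hij : i < j) (L : ℕ) :
    ∃ r : ℕ, ∀ k m : ℕ, k ≤ L → m ≤ L → (m : R) * t ^ (r * i + k) < (t ^ j) ^ r := by
  obtain ⟨r, hr⟩ := pow_unbounded_of_one_lt (L * t ^ L) ht
  refine ⟨r, fun k m hk hm => ?_⟩
  have : 0 < t := zero_lt_one.trans ht
  calc m * t ^ (r * i + k)
      ≤ L * t ^ (r * i + L) := by gcongr; exact ht.le
    _ = t ^ (r * i) * (L * t ^ L) := by ring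
    _ < t ^ (r * i) * t ^ r := by gcongr
    _ = t ^ ((i + 1) * r) := by ring
    _ ≤ t ^ (j * r) := by gcongr; exacts [ht.le, hij]
    _ = (t ^ j) ^ r := pow_mul t j r

theorem exists_one_lt_pow_eq {a : ℝ} (ha : 1 < a) {n : ℕ} (hn : n ≠ 0) :
    ∃ t : ℝ, 1 < t ∧ t ^ n = a :=
  ⟨a ^ (n⁻¹ : ℝ), Real.one_lt_rpow ha (by positivity),
    Real.rpow_inv_natCast_pow (zero_le_one.trans ha.le) hn⟩

/-- Let `H = ℤ[x,x⁻¹]` with `α : p(x) ↦ x·p(x)` and `S = {±x^m : m ≥ 0}`, and define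
`Q^i` as above. Then for all `1 ≤ i < j` and every `L ≥ 0` there is `r ≥ 0` such that
for all `k, m ≥ 0` with `2k + m ≤ L`, the Laurent polynomial `2^r·x^{ri+k}` is not a
sum of `m` elements of `Q^j`. -/
theorem QLSet_distinct (i j : ℕ) (hi : 1 ≤ i) (hij : i < j) (L : ℕ) :
    ∃ r : ℕ, ∀ k m : ℕ, 2 * k + m ≤ L →
      ¬∃ f : ℕ → LaurentPolynomial ℤ, (∀ a < m, f a ∈ QLSet j) ∧
        ∑ a ∈ Finset.range m, f a = (2 ^ r : ℤ) • T ((r * i + k : ℕ) : ℤ) := by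
  obtain ⟨t, ht, htj⟩ := exists_one_lt_pow_eq one_lt_two (Nat.ne_zero_of_lt hij)
  obtain ⟨r, hr⟩ := exists_forall_mul_pow_lt_pow ht hij L
  refine ⟨r, fun k m hkm ⟨f, hf, hsum⟩ => ?_⟩
  have hsmall : (m : ℝ) * t ^ (r * i + k) < 2 ^ r := htj ▸ hr k m (by omega) (by omega)
  have hbound := abs_coeff_sum_le_card_mul_zpow ht.le htj.ge
    (fun a ha => hf a (Finset.mem_range.1 ha)) ((r * i + k : ℕ) : ℤ)
  have hcoeff : ((2 ^ r : ℤ) • (T ((r * i + k : ℕ) : ℤ) : LaurentPolynomial ℤ)).coeff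
      ((r * i + k : ℕ) : ℤ) = 2 ^ r := by
    rw [AddMonoidAlgebra.coeff_smul, Finsupp.smul_apply, T_apply, if_pos rfl, smul_eq_mul, mul_one]
  rw [hsum, hcoeff, Finset.card_range, zpow_natCast] at hbound
  push_cast at hbound
  exact (le_of_abs_le hbound).not_gt hsmall
end
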